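/- arXiv:1801.07982 — 2 statements merged into one kernel-verified Lean document; each statement's English description precedes it below -/
import Mathlib

section
/- Let A be a finite set of nonzero rational numbers, let K be a positive integer with |AA| ≤ K|A|, let k ≥ 2 be an integer, and let λ be a nonzero rational number with -λ ∉ A. Then |(A+λ)^{(k)}| ≥ |A|^k / (8k^4)^{kK}. -/
open Finset Pointwise

/-- The `k`-fold product set of a finite set `B` of rationals:
`B^(k) = {b₁ ⋯ b_k : bᵢ ∈ B}`. -/
def kfoldProd (k : ℕ) (B : Finset ℚ) : Finset ℚ :=
  (Fintype.piFinset fun _ : Fin k => B).image fun f => ∏ i, f i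

open ComplexConjugate

/-- The tuples with entries in prescribed sets that solve
`∏ (1 + aᵢ) = ∏ (1 + bᵢ)`, where both products have `k` factors. -/
def shiftedSolutions (k : ℕ) (S : Fin k ⊕ Fin k → Finset ℚ) : Finset (Fin k ⊕ Fin k → ℚ) :=
  (Fintype.piFinset S).filter fun x => ∏ i, (1 + x (.inl i)) = ∏ i, (1 + x (.inr i))

/-- The `k`-fold multiplicative energy of `B + 1`. -/
def shiftedEnergy (k : ℕ) (B : Finset ℚ) : ℕ :=
  (shiftedSolutions k fun _ => B).card

theorem exists_int_dilate (A : Finset ℚ) :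
    ∃ D : ℚ, D ≠ 0 ∧ ∃ c : ℚ → ℤ, ∀ a ∈ A, (c a : ℚ) = D * (1 + a) := by
  refine ⟨((∏ a ∈ A, a.den : ℕ) : ℚ), ?_, ?_⟩
  · exact_mod_cast Finset.prod_ne_zero_iff.2 fun a _ => Rat.den_ne_zero a
  · refine ⟨fun a => (∏ a ∈ A, (a.den : ℤ)) + (∏ b ∈ A.erase a, (b.den : ℤ)) * a.num, ?_⟩
    intro a ha
    have h := Rat.mul_den_eq_num a
    push_cast
    rw [← Finset.mul_prod_erase A _ ha, ← h]
    ring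

theorem exists_orthogonal_characters (k : ℕ) (A : Finset ℚ) (hA : (-1 : ℚ) ∉ A) :
    ∃ (Ω : Type) (_ : Fintype Ω) (N : ℝ) (F : Ω → ℚ → ℂ), 0 < N ∧
      ∀ x : Fin k ⊕ Fin k → ℚ, (∀ i, x i ∈ A) →
        ∑ χ, (∏ i, F χ (x (.inl i))) * ∏ i, conj (F χ (x (.inr i))) =
          if ∏ i, (1 + x (.inl i)) = ∏ i, (1 + x (.inr i)) then (N : ℂ) else 0 := by
  obtain ⟨D, hD, c, hc⟩ := exists_int_dilate A
  obtain ⟨M, hM⟩ : ∃ M : ℕ, ∀ a ∈ A, (c a).natAbs ≤ M :=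
    ⟨A.sup fun a => (c a).natAbs, fun a ha => Finset.le_sup (f := fun a => (c a).natAbs) ha⟩
  obtain ⟨q, hq, hqp⟩ := Nat.exists_infinite_primes (M + 2 * M ^ k + 1)
  have : Fact q.Prime := ⟨hqp⟩
  have hc0 : ∀ a ∈ A, c a ≠ 0 := by
    intro a ha h
    have h1 := hc a ha
    rw [h, Int.cast_zero, eq_comm, mul_eq_zero, or_iff_right hD] at h1
    exact hA (by rwa [show (-1 : ℚ) = a by linarith])
  have hprod : ∀ y : Fin k → ℚ, (∀ i, y i ∈ A) →
      ((∏ i, c (y i) : ℤ) : ℚ) = D ^ k * ∏ i, (1 + y i) := by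
    intro y hy
    rw [Int.cast_prod, Finset.prod_congr rfl fun i _ => hc _ (hy i), Finset.prod_mul_distrib]
    simp
  have hbound : ∀ y : Fin k → ℚ, (∀ i, y i ∈ A) → (∏ i, c (y i)).natAbs ≤ M ^ k := by
    intro y hy
    rw [← Int.natAbsHom_apply, map_prod]
    simpa using Finset.prod_le_pow_card Finset.univ (fun i => (c (y i)).natAbs) M
      fun i _ => hM _ (hy i)
  have hunit : ∀ y : Fin k → ℚ, (∀ i, y i ∈ A) → IsUnit ((∏ i, c (y i) : ℤ) : ZMod q) := by
    intro y hy
    rw [isUnit_iff_ne_zero, Int.cast_prod, Finset.prod_ne_zero_iff]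
    intro i _ h
    rw [ZMod.intCast_zmod_eq_zero_iff_dvd] at h
    have h1 := Int.natAbs_le_of_dvd_ne_zero h (hc0 _ (hy i))
    have h2 := hM _ (hy i)
    simp at h1
    omega
  refine ⟨DirichletCharacter ℂ q, inferInstance, q.totient, fun χ a => χ (c a : ZMod q), ?_, ?_⟩
  · exact_mod_cast Nat.totient_pos.2 hqp.pos
  · intro x hx
    have key := DirichletCharacter.sum_char_inv_mul_char_eq ℂ
      (hunit (fun i => x (.inr i)) fun i => hx _) ((∏ i, c (x (.inl i)) : ℤ) : ZMod q)
    have hconj : ∀ (χ : DirichletCharacter ℂ q) (z : ZMod q), conj (χ z) = χ z⁻¹ := by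
      intro χ z
      rw [← MulChar.inv_apply', ← MulChar.star_apply']
      rfl
    have hL : ∀ χ : DirichletCharacter ℂ q,
        (∏ i, χ (c (x (.inl i)) : ZMod q)) * ∏ i, conj (χ (c (x (.inr i)) : ZMod q)) =
          χ ((∏ i, c (x (.inr i)) : ℤ) : ZMod q)⁻¹ * χ ((∏ i, c (x (.inl i)) : ℤ) : ZMod q) := by
      intro χ
      rw [← hconj, Int.cast_prod, Int.cast_prod, map_prod, map_prod, map_prod, mul_comm]
    rw [Finset.sum_congr rfl fun χ _ => hL χ, key]
    have hiff : (((∏ i, c (x (.inr i)) : ℤ) : ZMod q) = ((∏ i, c (x (.inl i)) : ℤ) : ZMod q)) ↔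
        ∏ i, (1 + x (.inl i)) = ∏ i, (1 + x (.inr i)) := by
      have h1 := hprod (fun i => x (.inl i)) fun i => hx _
      have h2 := hprod (fun i => x (.inr i)) fun i => hx _
      have b1 := hbound (fun i => x (.inl i)) fun i => hx _
      have b2 := hbound (fun i => x (.inr i)) fun i => hx _
      constructor
      · intro h
        rw [ZMod.intCast_eq_intCast_iff_dvd_sub] at h
        have h0 := Int.eq_zero_of_abs_lt_dvd h (by rw [abs_lt]; omega)
        rw [sub_eq_zero] at h0
        rw [h0, h2] at h1
        exact (mul_left_cancel₀ (pow_ne_zero k hD) h1).symm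
      · intro h
        rw [← h, ← h1] at h2
        rw [Int.cast_injective h2]
    simp only [hiff]
    simp

theorem card_shiftedSolutions_eq {k : ℕ} {A : Finset ℚ} {Ω : Type} [Fintype Ω] {N : ℝ}
    {F : Ω → ℚ → ℂ}
    (hF : ∀ x : Fin k ⊕ Fin k → ℚ, (∀ i, x i ∈ A) →
      ∑ χ, (∏ i, F χ (x (.inl i))) * ∏ i, conj (F χ (x (.inr i))) =
        if ∏ i, (1 + x (.inl i)) = ∏ i, (1 + x (.inr i)) then (N : ℂ) else 0)
    (S : Fin k ⊕ Fin k → Finset ℚ) (hS : ∀ i, S i ⊆ A) :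
    (N : ℂ) * (shiftedSolutions k S).card =
      ∑ χ, (∏ i, ∑ a ∈ S (.inl i), F χ a) * ∏ i, conj (∑ a ∈ S (.inr i), F χ a) := by
  have h : ∀ χ, (∏ i, ∑ a ∈ S (.inl i), F χ a) * ∏ i, conj (∑ a ∈ S (.inr i), F χ a) =
      ∑ x ∈ Fintype.piFinset S,
        (∏ i, F χ (x (.inl i))) * ∏ i, conj (F χ (x (.inr i))) := by
    intro χ
    have := Finset.prod_univ_sum S
      (fun i a => Sum.elim (fun _ => F χ a) (fun _ => conj (F χ a)) i)
    simp only [Fintype.prod_sum_type, Sum.elim_inl, Sum.elim_inr] at this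
    rw [← this]
    simp only [map_sum]
  rw [Finset.sum_congr rfl fun χ _ => h χ, Finset.sum_comm,
    Finset.sum_congr rfl fun x hx => hF x fun i => hS i (Fintype.mem_piFinset.1 hx i),
    ← Finset.sum_filter, Finset.sum_const, nsmul_eq_mul, mul_comm]
  rfl

theorem card_shiftedSolutions_le {k : ℕ} {A : Finset ℚ} {Ω : Type} [Fintype Ω] {N : ℝ}
    (hN : 0 < N) {F : Ω → ℚ → ℂ}
    (hF : ∀ x : Fin k ⊕ Fin k → ℚ, (∀ i, x i ∈ A) →
      ∑ χ, (∏ i, F χ (x (.inl i))) * ∏ i, conj (F χ (x (.inr i))) =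
        if ∏ i, (1 + x (.inl i)) = ∏ i, (1 + x (.inr i)) then (N : ℂ) else 0)
    (S : Fin k ⊕ Fin k → Finset ℚ) (hS : ∀ i, S i ⊆ A) :
    N * (shiftedSolutions k S).card ≤ ∑ χ, ∏ i, ‖∑ a ∈ S i, F χ a‖ := by
  have h := congrArg norm (card_shiftedSolutions_eq hF S hS)
  rw [norm_mul, Complex.norm_real, Complex.norm_natCast, Real.norm_of_nonneg hN.le] at h
  rw [h]
  refine (norm_sum_le _ _).trans (Finset.sum_le_sum fun χ _ => ?_)
  rw [norm_mul, norm_prod, norm_prod, Fintype.prod_sum_type]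
  simp only [RCLike.norm_conj, le_refl]

theorem shiftedEnergy_eq_sum_norm_pow {k : ℕ} {A : Finset ℚ} {Ω : Type} [Fintype Ω] {N : ℝ}
    {F : Ω → ℚ → ℂ}
    (hF : ∀ x : Fin k ⊕ Fin k → ℚ, (∀ i, x i ∈ A) →
      ∑ χ, (∏ i, F χ (x (.inl i))) * ∏ i, conj (F χ (x (.inr i))) =
        if ∏ i, (1 + x (.inl i)) = ∏ i, (1 + x (.inr i)) then (N : ℂ) else 0)
    {B : Finset ℚ} (hB : B ⊆ A) :
    N * shiftedEnergy k B = ∑ χ, ‖∑ a ∈ B, F χ a‖ ^ (2 * k) := by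
  have h := card_shiftedSolutions_eq hF (fun _ => B) fun _ => hB
  have h2 : ((N * shiftedEnergy k B : ℝ) : ℂ) =
      ((∑ χ, ‖∑ a ∈ B, F χ a‖ ^ (2 * k) : ℝ) : ℂ) := by
    push_cast
    rw [shiftedEnergy, h]
    refine Finset.sum_congr rfl fun χ _ => ?_
    simp only [Finset.prod_const, Finset.card_univ, Fintype.card_fin]
    rw [← mul_pow, Complex.mul_conj, Complex.normSq_eq_norm_sq, pow_mul]
    push_cast
    rfl
  exact_mod_cast h2

theorem sum_sq_mul_pow_le {Ω : Type*} [Fintype Ω] {k : ℕ} (hk : 2 ≤ k) (u v : Ω → ℝ)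
    (hv : ∀ ω, 0 ≤ v ω) :
    ∑ ω, u ω ^ 2 * v ω ^ (2 * k - 2) ≤
      (∑ ω, u ω ^ (2 * k)) ^ (1 / (k : ℝ)) * (∑ ω, v ω ^ (2 * k)) ^ (1 - 1 / (k : ℝ)) := by
  have hk1 : (1 : ℝ) < k := by exact_mod_cast hk
  have h := Real.inner_le_Lp_mul_Lq_of_nonneg Finset.univ (Real.HolderConjugate.conjExponent hk1)
    (f := fun ω => u ω ^ 2) (g := fun ω => v ω ^ (2 * k - 2))
    (fun ω _ => by positivity) (fun ω _ => pow_nonneg (hv ω) _)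
  have h1 : ∀ ω, (u ω ^ 2) ^ (k : ℝ) = u ω ^ (2 * k) := by
    intro ω
    rw [Real.rpow_natCast, pow_mul]
  have h2 : ∀ ω, (v ω ^ (2 * k - 2)) ^ Real.conjExponent (k : ℝ) = v ω ^ (2 * k) := by
    intro ω
    rw [← Real.rpow_natCast, ← Real.rpow_mul (hv ω), ← Real.rpow_natCast]
    congr 1
    rw [Real.conjExponent, Nat.cast_sub (by omega)]
    have : (k : ℝ) - 1 ≠ 0 := by linarith
    push_cast
    field_simp
  have h3 : 1 / Real.conjExponent (k : ℝ) = 1 - 1 / (k : ℝ) := by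
    rw [Real.conjExponent]
    have : (k : ℝ) - 1 ≠ 0 := by linarith
    field_simp
  simpa only [h1, h2, h3] using h

/-- If every solution has two entries with the same label, then the energy of `B` is controlled by
the energies of the fibres of the label. -/
theorem shiftedEnergy_le_of_fiber {k : ℕ} (hk : 2 ≤ k) {B : Finset ℚ} (hB : (-1 : ℚ) ∉ B)
    (l : ℚ → ℚ)
    (hl : ∀ x ∈ shiftedSolutions k fun _ => B, ¬ Function.Injective fun i => l (x i))
    {M : ℝ} (hM : 0 ≤ M)
    (hfib : ∀ j, (shiftedEnergy k {a ∈ B | l a = j} : ℝ) ≤ (M * #{a ∈ B | l a = j}) ^ k) :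
    (shiftedEnergy k B : ℝ) ≤ (4 * k ^ 2 * M * #B) ^ k := by
  obtain ⟨Ω, _, N, F, hN, hF⟩ := exists_orthogonal_characters k B hB
  set ι := Fin k ⊕ Fin k
  have hcardι : Fintype.card ι = 2 * k := by simp [ι, two_mul]
  let fib : ℚ → Finset ℚ := fun j => {a ∈ B | l a = j}
  let S : ι × ι → ℚ → ι → Finset ℚ := fun st j i => if i = st.1 ∨ i = st.2 then fib j else B
  have hfibB : ∀ j, fib j ⊆ B := fun j => Finset.filter_subset _ _
  have hSB : ∀ st j i, S st j i ⊆ B := by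
    intro st j i
    simp only [S]
    split_ifs
    exacts [hfibB j, le_refl _]
  have hcover : (shiftedSolutions k fun _ => B) ⊆
      (univ : Finset ι).offDiag.biUnion fun st => (B.image l).biUnion fun j =>
        shiftedSolutions k (S st j) := by
    intro x hx
    have hnot := hl x hx
    simp only [Function.Injective, not_forall] at hnot
    obtain ⟨s, t, hst, hne⟩ := hnot
    rw [shiftedSolutions, Finset.mem_filter, Fintype.mem_piFinset] at hx
    simp only [Finset.mem_biUnion, Finset.mem_offDiag, Finset.mem_image]
    refine ⟨(s, t), ⟨mem_univ _, mem_univ _, hne⟩, l (x s), ⟨x s, hx.1 s, rfl⟩, ?_⟩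
    rw [shiftedSolutions, Finset.mem_filter, Fintype.mem_piFinset]
    refine ⟨fun i => ?_, hx.2⟩
    simp only [S]
    split_ifs with h
    · rcases h with rfl | rfl
      · exact Finset.mem_filter.2 ⟨hx.1 _, rfl⟩
      · exact Finset.mem_filter.2 ⟨hx.1 _, hst.symm⟩
    · exact hx.1 i
  have hcount : (shiftedEnergy k B : ℝ) ≤ ∑ st ∈ (univ : Finset ι).offDiag, ∑ j ∈ B.image l,
      ((shiftedSolutions k (S st j)).card : ℝ) := by
    exact_mod_cast (Finset.card_le_card hcover).trans
      (Finset.card_biUnion_le.trans (Finset.sum_le_sum fun st _ => Finset.card_biUnion_le))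
  set X : ℝ := N * shiftedEnergy k B with hX
  have hX0 : 0 ≤ X := by positivity
  have hone : ∀ st ∈ (univ : Finset ι).offDiag, ∀ j,
      N * ((shiftedSolutions k (S st j)).card : ℝ) ≤
        N ^ (1 / (k : ℝ)) * (M * #(fib j)) * X ^ (1 - 1 / (k : ℝ)) := by
    intro st hst j
    have hne : st.1 ≠ st.2 := (Finset.mem_offDiag.1 hst).2.2
    have hprod : ∀ χ, ∏ i, ‖∑ a ∈ S st j i, F χ a‖ =
        ‖∑ a ∈ fib j, F χ a‖ ^ 2 * ‖∑ a ∈ B, F χ a‖ ^ (2 * k - 2) := by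
      intro χ
      have h1 : ∀ i, ‖∑ a ∈ S st j i, F χ a‖ = if i ∈ ({st.1, st.2} : Finset ι) then
          ‖∑ a ∈ fib j, F χ a‖ else ‖∑ a ∈ B, F χ a‖ := by
        intro i
        simp only [S, Finset.mem_insert, Finset.mem_singleton]
        split_ifs <;> rfl
      rw [Finset.prod_congr rfl fun i _ => h1 i, Finset.prod_ite, Finset.prod_const,
        Finset.prod_const, Finset.filter_mem_eq_inter, Finset.univ_inter, Finset.card_pair hne,
        Finset.filter_not, Finset.filter_mem_eq_inter, Finset.univ_inter,
        Finset.card_sdiff_of_subset (Finset.subset_univ _), Finset.card_pair hne,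
        Finset.card_univ, hcardι]
    calc N * ((shiftedSolutions k (S st j)).card : ℝ)
        ≤ ∑ χ, ∏ i, ‖∑ a ∈ S st j i, F χ a‖ := card_shiftedSolutions_le hN hF _ (hSB st j)
      _ = ∑ χ, ‖∑ a ∈ fib j, F χ a‖ ^ 2 * ‖∑ a ∈ B, F χ a‖ ^ (2 * k - 2) :=
          Finset.sum_congr rfl fun χ _ => hprod χ
      _ ≤ _ := sum_sq_mul_pow_le hk _ _ fun _ => norm_nonneg _
      _ = (N * shiftedEnergy k (fib j)) ^ (1 / (k : ℝ)) * X ^ (1 - 1 / (k : ℝ)) := by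
          rw [← shiftedEnergy_eq_sum_norm_pow hF (hfibB j),
            ← shiftedEnergy_eq_sum_norm_pow hF (le_refl B)]
      _ ≤ _ := by
          refine mul_le_mul_of_nonneg_right ?_ (Real.rpow_nonneg hX0 _)
          rw [Real.mul_rpow hN.le (Nat.cast_nonneg _)]
          refine mul_le_mul_of_nonneg_left ?_ (Real.rpow_nonneg hN.le _)
          refine (Real.rpow_le_rpow (Nat.cast_nonneg _) (hfib j) (by positivity)).trans ?_
          rw [one_div, Real.pow_rpow_inv_natCast (by positivity) (by omega)]
  have hXle : X ≤ (4 * k ^ 2 * M * #B) * N ^ (1 / (k : ℝ)) * X ^ (1 - 1 / (k : ℝ)) := by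
    have hsum : ∑ j ∈ B.image l, (#(fib j) : ℝ) = #B := by
      rw [Finset.card_eq_sum_card_image l B]
      push_cast
      rfl
    have hoff : (((univ : Finset ι).offDiag.card : ℕ) : ℝ) ≤ 4 * k ^ 2 := by
      rw [Finset.offDiag_card, Finset.card_univ, hcardι]
      have : 2 * k * (2 * k) - 2 * k ≤ 4 * k ^ 2 := by
        refine (Nat.sub_le _ _).trans (le_of_eq (by ring))
      exact_mod_cast this
    calc X ≤ N * ∑ st ∈ (univ : Finset ι).offDiag, ∑ j ∈ B.image l,
          ((shiftedSolutions k (S st j)).card : ℝ) := mul_le_mul_of_nonneg_left hcount hN.le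
      _ ≤ ∑ st ∈ (univ : Finset ι).offDiag, ∑ j ∈ B.image l,
          N ^ (1 / (k : ℝ)) * (M * #(fib j)) * X ^ (1 - 1 / (k : ℝ)) := by
          rw [Finset.mul_sum]
          refine Finset.sum_le_sum fun st hst => ?_
          rw [Finset.mul_sum]
          exact Finset.sum_le_sum fun j _ => hone st hst j
      _ = ((univ : Finset ι).offDiag.card : ℝ) *
          (N ^ (1 / (k : ℝ)) * (M * #B) * X ^ (1 - 1 / (k : ℝ))) := by
          rw [Finset.sum_const, nsmul_eq_mul, ← Finset.sum_mul, ← Finset.mul_sum, ← Finset.mul_sum,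
            hsum]
      _ ≤ (4 * k ^ 2) * (N ^ (1 / (k : ℝ)) * (M * #B) * X ^ (1 - 1 / (k : ℝ))) :=
          mul_le_mul_of_nonneg_right hoff (by positivity)
      _ = _ := by ring
  rcases hX0.eq_or_lt with h0 | hpos
  · have : (shiftedEnergy k B : ℝ) = 0 := by
      rw [hX, eq_comm, mul_eq_zero] at h0
      exact h0.resolve_left hN.ne'
    rw [this]
    exact pow_nonneg (mul_nonneg (mul_nonneg (by positivity) hM) (Nat.cast_nonneg _)) k
  · have hroot : X ^ (1 / (k : ℝ)) ≤ (4 * k ^ 2 * M * #B) * N ^ (1 / (k : ℝ)) := by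
      have hsplit : X = X ^ (1 / (k : ℝ)) * X ^ (1 - 1 / (k : ℝ)) := by
        rw [← Real.rpow_add hpos]
        simp
      have hp : 0 < X ^ (1 - 1 / (k : ℝ)) := Real.rpow_pos_of_pos hpos _
      refine le_of_mul_le_mul_right ?_ hp
      rwa [← hsplit]
    have hpow := pow_le_pow_left₀ (Real.rpow_nonneg hX0 _) hroot k
    rw [mul_pow, one_div, Real.rpow_inv_natCast_pow hX0 (by omega),
      Real.rpow_inv_natCast_pow hN.le (by omega), hX, mul_comm] at hpow
    exact le_of_mul_le_mul_right hpow hN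

theorem shiftedSolutions_mono {k : ℕ} {S T : Fin k ⊕ Fin k → Finset ℚ} (h : ∀ i, S i ⊆ T i) :
    shiftedSolutions k S ⊆ shiftedSolutions k T :=
  Finset.filter_subset_filter _ (Fintype.piFinset_subset _ _ h)

/-- Iterated form of `shiftedEnergy_le_of_fiber` for a finite family of labels. -/
theorem shiftedEnergy_le_of_joint_fiber {k : ℕ} (hk : 2 ≤ k) (l : ℕ → ℚ → ℚ)
    {M : ℝ} (hM : 0 ≤ M) (Q : Finset ℕ) :
    ∀ B : Finset ℚ, (-1 : ℚ) ∉ B →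
      (∀ p ∈ Q, ∀ x ∈ shiftedSolutions k fun _ => B, ¬ Function.Injective fun i => l p (x i)) →
      (∀ B' ⊆ B, (∀ p ∈ Q, ∀ a ∈ B', ∀ b ∈ B', l p a = l p b) →
        (shiftedEnergy k B' : ℝ) ≤ (M * #B') ^ k) →
      (shiftedEnergy k B : ℝ) ≤ ((4 * k ^ 2) ^ #Q * M * #B) ^ k := by
  induction Q using Finset.induction_on with
  | empty =>
    intro B _ _ h
    rw [Finset.card_empty, pow_zero, one_mul]
    exact h B (le_refl _) fun p hp => absurd hp (Finset.notMem_empty p)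
  | insert p Q hp ih =>
    intro B hB hrep hfib
    have := shiftedEnergy_le_of_fiber hk hB (l p) (hrep p (Finset.mem_insert_self _ _))
      (M := (4 * k ^ 2) ^ #Q * M) (by positivity) fun j => ?_
    · rwa [Finset.card_insert_of_notMem hp, pow_succ',
        mul_assoc (4 * (k : ℝ) ^ 2) ((4 * (k : ℝ) ^ 2) ^ #Q) M]
    · have hsub : ({a ∈ B | l p a = j} : Finset ℚ) ⊆ B := Finset.filter_subset _ _
      refine ih _ (fun h => hB (hsub h)) (fun q hq x hx => ?_) fun B' hB' hc => ?_
      · exact hrep q (Finset.mem_insert_of_mem hq) x (shiftedSolutions_mono (fun _ => hsub) hx)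
      · refine hfib B' (hB'.trans hsub) fun q hq a ha b hb => ?_
        rcases Finset.mem_insert.1 hq with rfl | hq
        · rw [(Finset.mem_filter.1 (hB' ha)).2, (Finset.mem_filter.1 (hB' hb)).2]
        · exact hc q hq a ha b hb

section Padic

variable {p : ℕ} [Fact p.Prime]

theorem padicNorm_sub_lt {x y ε : ℚ} (hx : padicNorm p x < ε) (hy : padicNorm p y < ε) :
    padicNorm p (x - y) < ε :=
  padicNorm.sub.trans_lt (max_lt hx hy)

theorem padicNorm_eq_one_of_sub_one_lt {x : ℚ} (hx : padicNorm p (x - 1) < 1) :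
    padicNorm p x = 1 := by
  have h := padicNorm.add_eq_max_of_ne (p := p) (q := x - 1) (r := 1) (by simpa using hx.ne)
  rw [sub_add_cancel, padicNorm.one] at h
  rw [h, max_eq_right hx.le]

theorem padicNorm_prod_one_add_sub_one_lt {ι : Type*} (s : Finset ι) (x : ι → ℚ) {ε : ℚ}
    (hε0 : 0 < ε) (hε : ε ≤ 1) (h : ∀ i ∈ s, padicNorm p (x i) < ε) :
    padicNorm p (∏ i ∈ s, (1 + x i) - 1) < ε := by
  classical
  induction s using Finset.induction_on with
  | empty => simpa using hε0
  | insert i s hi ih =>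
    have h1 := ih fun j hj => h j (Finset.mem_insert_of_mem hj)
    have h2 := padicNorm_eq_one_of_sub_one_lt (h1.trans_le hε)
    rw [Finset.prod_insert hi, show (1 + x i) * ∏ j ∈ s, (1 + x j) - 1 =
      (∏ j ∈ s, (1 + x j) - 1) + x i * ∏ j ∈ s, (1 + x j) by ring]
    refine padicNorm.nonarchimedean.trans_lt (max_lt h1 ?_)
    rw [padicNorm.mul, h2, mul_one]
    exact h i (Finset.mem_insert_self _ _)

theorem prod_one_add_ne_of_dominant {k : ℕ} {y z : Fin k → ℚ} (m : Fin k) (hm0 : y m ≠ 0)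
    (hm1 : padicNorm p (y m) < 1) (hy : ∀ i, i ≠ m → padicNorm p (y i) < padicNorm p (y m))
    (hz : ∀ i, padicNorm p (z i) < padicNorm p (y m)) :
    ∏ i, (1 + y i) ≠ ∏ i, (1 + z i) := by
  intro heq
  have hpos : 0 < padicNorm p (y m) :=
    lt_of_le_of_ne (padicNorm.nonneg _) (Ne.symm (padicNorm.nonzero hm0))
  have h1 := padicNorm_prod_one_add_sub_one_lt (p := p) (Finset.univ.erase m) y hpos hm1.le
    fun i hi => hy i (Finset.ne_of_mem_erase hi)
  have h2 := padicNorm_prod_one_add_sub_one_lt (p := p) Finset.univ z hpos hm1.le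
    fun i _ => hz i
  have h3 := padicNorm_eq_one_of_sub_one_lt (h1.trans hm1)
  rw [← Finset.mul_prod_erase Finset.univ _ (Finset.mem_univ m)] at heq
  have h4 := padicNorm_sub_lt h2 h1
  rw [← heq, show (1 + y m) * ∏ i ∈ Finset.univ.erase m, (1 + y i) - 1 -
    (∏ i ∈ Finset.univ.erase m, (1 + y i) - 1) = y m * ∏ i ∈ Finset.univ.erase m, (1 + y i) by ring,
    padicNorm.mul, h3, mul_one] at h4
  exact h4.false

theorem not_injective_padicNorm_of_lt_one {k : ℕ} (hk : 2 ≤ k) {x : Fin k ⊕ Fin k → ℚ}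
    (hx0 : ∀ i, x i ≠ 0) (hx1 : ∀ i, padicNorm p (x i) < 1)
    (heq : ∏ i, (1 + x (.inl i)) = ∏ i, (1 + x (.inr i))) :
    ¬ Function.Injective fun i => padicNorm p (x i) := by
  intro hinj
  have : Nonempty (Fin k ⊕ Fin k) := ⟨.inl ⟨0, by omega⟩⟩
  obtain ⟨m, hm⟩ := Finite.exists_max fun i => padicNorm p (x i)
  have hlt : ∀ i, i ≠ m → padicNorm p (x i) < padicNorm p (x m) :=
    fun i hi => lt_of_le_of_ne (hm i) fun h => hi (hinj h)
  rcases m with m | m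
  · exact prod_one_add_ne_of_dominant (p := p) (y := fun i => x (.inl i))
      (z := fun i => x (.inr i)) m (hx0 _) (hx1 _) (fun i hi => hlt _ (by simpa using hi))
      (fun i => hlt _ (by simp)) heq
  · exact prod_one_add_ne_of_dominant (p := p) (y := fun i => x (.inr i))
      (z := fun i => x (.inl i)) m (hx0 _) (hx1 _) (fun i hi => hlt _ (by simpa using hi))
      (fun i => hlt _ (by simp)) heq.symm

theorem not_injective_padicNorm_of_one_lt {k : ℕ} (hk : 2 ≤ k) {x : Fin k ⊕ Fin k → ℚ}
    (hx0 : ∀ i, x i ≠ 0) (hx1 : ∀ i, 1 < padicNorm p (x i))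
    (heq : ∏ i, (1 + x (.inl i)) = ∏ i, (1 + x (.inr i)))
    (hprod : ∏ i, x (.inl i) = ∏ i, x (.inr i)) :
    ¬ Function.Injective fun i => padicNorm p (x i) := by
  have hinv : ∀ a : ℚ, padicNorm p a⁻¹ = (padicNorm p a)⁻¹ := by
    intro a
    rw [← one_div, padicNorm.div, padicNorm.one, one_div]
  have hfac : ∀ y : Fin k → ℚ, (∀ i, y i ≠ 0) →
      ∏ i, (1 + (y i)⁻¹) = (∏ i, (1 + y i)) / ∏ i, y i := by
    intro y hy
    rw [← Finset.prod_div_distrib]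
    refine Finset.prod_congr rfl fun i _ => ?_
    have := hy i
    field_simp
    ring
  have h := not_injective_padicNorm_of_lt_one (p := p) hk (x := fun i => (x i)⁻¹)
    (fun i => inv_ne_zero (hx0 i)) (fun i => by rw [hinv]; exact inv_lt_one_of_one_lt₀ (hx1 i))
    (by rw [hfac (fun i => x (.inl i)) fun i => hx0 _, hfac (fun i => x (.inr i)) fun i => hx0 _,
      heq, hprod])
  intro hinj
  refine h fun i j hij => hinj ?_
  simpa only [hinv, inv_inj] using hij

theorem padicNorm_one_add_of_one_lt {a : ℚ} (ha : 1 < padicNorm p a) :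
    padicNorm p (1 + a) = padicNorm p a := by
  rw [padicNorm.add_eq_max_of_ne (by simpa using ha.ne), padicNorm.one, max_eq_right ha.le]

theorem padicNorm_prod {ι : Type*} (s : Finset ι) (x : ι → ℚ) :
    padicNorm p (∏ i ∈ s, x i) = ∏ i ∈ s, padicNorm p (x i) := by
  classical
  induction s using Finset.induction_on with
  | empty => simp
  | insert i s hi ih => rw [Finset.prod_insert hi, Finset.prod_insert hi, padicNorm.mul, ih]

end Padic

theorem shiftedEnergy_le_of_card_le_one {k : ℕ} {B : Finset ℚ} (hB : #B ≤ 1) :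
    (shiftedEnergy k B : ℝ) ≤ (1 * #B : ℝ) ^ k := by
  have h : shiftedEnergy k B ≤ #B ^ (k + k) := by
    refine (Finset.card_filter_le _ _).trans (le_of_eq ?_)
    simp [Fintype.card_piFinset, pow_add]
  have h2 : #B ^ (k + k) ≤ #B ^ k := by
    rw [pow_add]
    exact mul_le_of_le_one_right (Nat.zero_le _) (pow_le_one₀ (Nat.zero_le _) hB)
  rw [one_mul]
  exact_mod_cast h.trans h2

/-- Energy bound for a set whose `k`-fold products are determined by the `p`-adic sizes for
`p ∈ P`, provided that no `p ∈ P` sees elements on different sides of the unit circle. -/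
theorem shiftedEnergy_le_of_determining_primes {k : ℕ} (hk : 2 ≤ k) {B : Finset ℚ}
    (hB : (-1 : ℚ) ∉ B) (hB0 : (0 : ℚ) ∉ B) (P : Finset ℕ) (hP : ∀ p ∈ P, p.Prime)
    (hsep : ∀ p ∈ P, (∀ a ∈ B, padicNorm p a < 1) ∨ (∀ a ∈ B, padicNorm p a = 1) ∨
      ∀ a ∈ B, 1 < padicNorm p a)
    (hdet : ∀ x : Fin k ⊕ Fin k → ℚ, (∀ i, x i ∈ B) →
      (∀ p ∈ P, ∏ i, padicNorm p (x (.inl i)) = ∏ i, padicNorm p (x (.inr i))) →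
      ∏ i, x (.inl i) = ∏ i, x (.inr i)) :
    (shiftedEnergy k B : ℝ) ≤ ((4 * k ^ 2) ^ #P * #B) ^ k := by
  classical
  set Q₁ := {p ∈ P | ∀ a ∈ B, padicNorm p a < 1} with hQ₁
  set Q₂ := {p ∈ P | ¬ ∀ a ∈ B, padicNorm p a < 1}.filter fun p => ∀ a ∈ B, 1 < padicNorm p a
    with hQ₂
  have hne : ∀ a ∈ B, a ≠ 0 := fun a ha h => hB0 (h ▸ ha)
  have hsol : ∀ {C : Finset ℚ} {x : Fin k ⊕ Fin k → ℚ}, x ∈ (shiftedSolutions k fun _ => C) →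
      (∀ i, x i ∈ C) ∧ ∏ i, (1 + x (.inl i)) = ∏ i, (1 + x (.inr i)) := by
    intro C x hx
    rw [shiftedSolutions, Finset.mem_filter, Fintype.mem_piFinset] at hx
    exact hx
  have main := shiftedEnergy_le_of_joint_fiber hk padicNorm (M := (4 * k ^ 2) ^ #Q₂ * 1)
    (by positivity) Q₁ B hB ?_ ?_
  · refine main.trans (pow_le_pow_left₀ (by positivity) ?_ k)
    refine mul_le_mul_of_nonneg_right ?_ (Nat.cast_nonneg _)
    rw [mul_one, ← pow_add]
    refine pow_le_pow_right₀ ?_ ?_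
    · have : (2 : ℝ) ≤ k := by exact_mod_cast hk
      nlinarith
    · rw [← Finset.card_filter_add_card_filter_not (s := P) fun p => ∀ a ∈ B, padicNorm p a < 1]
      exact Nat.add_le_add_left (Finset.card_filter_le _ _) _
  · intro p hp x hx
    rw [hQ₁, Finset.mem_filter] at hp
    have : Fact p.Prime := ⟨hP p hp.1⟩
    obtain ⟨hxB, heq⟩ := hsol hx
    exact not_injective_padicNorm_of_lt_one hk (fun i => hne _ (hxB i)) (fun i => hp.2 _ (hxB i))
      heq
  · intro B' hB' hconst
    refine shiftedEnergy_le_of_joint_fiber hk padicNorm zero_le_one Q₂ B' (fun h => hB (hB' h))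
      ?_ ?_
    · intro p hp x hx
      rw [hQ₂, Finset.mem_filter, Finset.mem_filter] at hp
      have : Fact p.Prime := ⟨hP p hp.1.1⟩
      obtain ⟨hxB', heq⟩ := hsol hx
      have hxB : ∀ i, x i ∈ B := fun i => hB' (hxB' i)
      refine not_injective_padicNorm_of_one_lt hk (fun i => hne _ (hxB i))
        (fun i => hp.2 _ (hxB i)) heq (hdet x hxB fun q hq => ?_)
      have : Fact q.Prime := ⟨hP q hq⟩
      by_cases h1 : ∀ a ∈ B, padicNorm q a < 1
      · exact Finset.prod_congr rfl fun i _ =>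
          hconst q (Finset.mem_filter.2 ⟨hq, h1⟩) _ (hxB' _) _ (hxB' _)
      · rcases (hsep q hq).resolve_left h1 with h2 | h2
        · exact Finset.prod_congr rfl fun i _ => (h2 _ (hxB _)).trans (h2 _ (hxB _)).symm
        · have h3 := congrArg (padicNorm q) heq
          simpa only [padicNorm_prod, padicNorm_one_add_of_one_lt (h2 _ (hxB _))] using h3
    · intro C hC hconst₂
      refine shiftedEnergy_le_of_card_le_one (Finset.card_le_one.2 fun a ha b hb => ?_)
      have haB := hB' (hC ha)
      have hbB := hB' (hC hb)
      have hnorm : ∀ p ∈ P, padicNorm p a = padicNorm p b := by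
        intro p hp
        by_cases h1 : ∀ a ∈ B, padicNorm p a < 1
        · exact hconst p (Finset.mem_filter.2 ⟨hp, h1⟩) _ (hC ha) _ (hC hb)
        · rcases (hsep p hp).resolve_left h1 with h2 | h2
          · rw [h2 a haB, h2 b hbB]
          · exact hconst₂ p (Finset.mem_filter.2 ⟨Finset.mem_filter.2 ⟨hp, h1⟩, h2⟩) _ ha _ hb
      let m : Fin k := ⟨0, by omega⟩
      have h := hdet (Sum.elim (fun i => if i = m then a else b) fun _ => b)
        (by
          rintro (i | i) <;> simp only [Sum.elim_inl, Sum.elim_inr] <;> try split_ifs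
          all_goals assumption)
        (fun p hp => Finset.prod_congr rfl fun i _ => by
          simp only [Sum.elim_inl, Sum.elim_inr]
          split_ifs
          exacts [hnorm p hp, rfl])
      simp only [Sum.elim_inl, Sum.elim_inr] at h
      rw [← Finset.mul_prod_erase Finset.univ _ (Finset.mem_univ m),
        ← Finset.mul_prod_erase Finset.univ (fun _ => b) (Finset.mem_univ m), if_pos rfl,
        Finset.prod_congr rfl fun i hi => if_neg (Finset.ne_of_mem_erase hi)] at h
      exact mul_right_cancel₀ (Finset.prod_ne_zero_iff.2 fun _ _ => hne b hbB) h

/-- The vector of `p`-adic valuations of a rational number, padded by zero at non-primes. -/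
def valuationVector (x : ℚ) (p : ℕ) : ℚ :=
  if p.Prime then padicValRat p x else 0

theorem valuationVector_mul {x y : ℚ} (hx : x ≠ 0) (hy : y ≠ 0) :
    valuationVector (x * y) = valuationVector x + valuationVector y := by
  funext p
  simp only [valuationVector, Pi.add_apply]
  split_ifs with hp
  · have : Fact p.Prime := ⟨hp⟩
    rw [padicValRat.mul hx hy]
    push_cast
    rfl
  · simp

theorem valuationVector_abs (x : ℚ) : valuationVector |x| = valuationVector x := by
  rcases abs_choice x with h | h <;> rw [h]
  funext p
  simp only [valuationVector, padicValRat.neg]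

theorem valuationVector_prod {ι : Type*} (s : Finset ι) (x : ι → ℚ) (hx : ∀ i ∈ s, x i ≠ 0) :
    valuationVector (∏ i ∈ s, x i) = ∑ i ∈ s, valuationVector (x i) := by
  classical
  induction s using Finset.induction_on with
  | empty =>
    funext p
    simp [valuationVector]
  | insert i s hi ih =>
    have hs : ∀ j ∈ s, x j ≠ 0 := fun j hj => hx j (Finset.mem_insert_of_mem hj)
    rw [Finset.prod_insert hi, Finset.sum_insert hi, ← ih hs,
      valuationVector_mul (hx i (Finset.mem_insert_self _ _)) (Finset.prod_ne_zero_iff.2 hs)]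

theorem abs_eq_one_of_padicValRat_eq_zero {r : ℚ} (hr : r ≠ 0)
    (h : ∀ p : ℕ, p.Prime → padicValRat p r = 0) : |r| = 1 := by
  have hval : ∀ p : ℕ, p.Prime → padicValNat p r.num.natAbs = padicValNat p r.den := by
    intro p hp
    have := h p hp
    rw [padicValRat, padicValInt] at this
    omega
  have hnum0 : r.num.natAbs ≠ 0 := by simpa using hr
  have heq : r.num.natAbs = r.den := by
    refine Nat.eq_of_factorization_eq hnum0 r.den_ne_zero fun p => ?_
    by_cases hp : p.Prime
    · rw [Nat.factorization_def _ hp, Nat.factorization_def _ hp, hval p hp]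
    · rw [Nat.factorization_eq_zero_of_not_prime _ hp, Nat.factorization_eq_zero_of_not_prime _ hp]
  rw [Rat.abs_def, heq, Rat.divInt_self']
  simp

theorem abs_eq_of_valuationVector_eq {x y : ℚ} (hx : x ≠ 0) (hy : y ≠ 0)
    (h : valuationVector x = valuationVector y) : |x| = |y| := by
  have hr : |x / y| = 1 := by
    refine abs_eq_one_of_padicValRat_eq_zero (div_ne_zero hx hy) fun p hp => ?_
    have : Fact p.Prime := ⟨hp⟩
    have hp' := congrFun h p
    simp only [valuationVector, if_pos hp, Int.cast_inj] at hp'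
    rw [padicValRat.div hx hy, hp', sub_self]
  rwa [abs_div, div_eq_one_iff_eq (abs_ne_zero.2 hy)] at hr

/-- A finite-dimensional space of sequences injects into boundedly many coordinates. -/
theorem exists_determining_coordinates (n : ℕ) :
    ∀ V : Submodule ℚ (ℕ → ℚ), FiniteDimensional ℚ V → Module.finrank ℚ V ≤ n →
      ∃ P : Finset ℕ, #P ≤ n ∧ ∀ v ∈ V, (∀ p ∈ P, v p = 0) → v = 0 := by
  induction n with
  | zero =>
    intro V _ hV
    refine ⟨∅, le_refl _, fun v hv _ => ?_⟩
    rw [Submodule.finrank_eq_zero.1 (Nat.le_zero.1 hV)] at hv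
    simpa using hv
  | succ n ih =>
    intro V _ hV
    by_cases hbot : V = ⊥
    · refine ⟨∅, Nat.zero_le _, fun v hv _ => ?_⟩
      rw [hbot] at hv
      simpa using hv
    · obtain ⟨v, hv, hv0⟩ := Submodule.exists_mem_ne_zero_of_ne_bot hbot
      obtain ⟨p, hp⟩ := Function.ne_iff.1 hv0
      have hlt : V ⊓ LinearMap.ker (LinearMap.proj (R := ℚ) (φ := fun _ : ℕ => ℚ) p) < V := by
        refine lt_of_le_of_ne inf_le_left fun h => hp ?_
        rw [← h] at hv
        simpa using hv.2
      have hrank := Submodule.finrank_lt_finrank_of_lt hlt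
      obtain ⟨P, hP, hinj⟩ := ih _ (Submodule.finiteDimensional_of_le inf_le_left)
        (Nat.lt_succ_iff.1 (hrank.trans_le hV))
      refine ⟨insert p P, (Finset.card_insert_le _ _).trans (Nat.succ_le_succ hP), ?_⟩
      intro w hw hwP
      refine hinj w ⟨hw, ?_⟩ fun q hq => hwP q (Finset.mem_insert_of_mem hq)
      simpa using hwP p (Finset.mem_insert_self _ _)

/-- The `y ∈ X` with `y ≥ x` for which `x * y` is not a product of two elements of `X`
exceeding `x`. -/
def extremalPartners (X : Finset ℚ) (x : ℚ) : Finset ℚ :=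
  {y ∈ X | x ≤ y ∧ ∀ u ∈ X, ∀ v ∈ X, x < u → x < v → u * v ≠ x * y}

theorem self_mem_extremalPartners {X : Finset ℚ} {x : ℚ} (hx : x ∈ X) (hx0 : 0 < x) :
    x ∈ extremalPartners X x :=
  Finset.mem_filter.2 ⟨hx, le_refl _, fun _ _ _ _ hu hv =>
    (mul_lt_mul'' hu hv hx0.le hx0.le).ne'⟩

theorem sum_card_extremalPartners_le {A : Finset ℚ} (hA : (0 : ℚ) ∉ A) :
    ∑ a ∈ A, #(extremalPartners (A.image abs) |a|) ≤ #(A * A) := by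
  classical
  have hrep : ∀ y : ℚ, ∃ r : ℚ, y ∈ A.image abs → r ∈ A ∧ |r| = y := by
    intro y
    by_cases hy : y ∈ A.image abs
    · obtain ⟨r, hr, h⟩ := Finset.mem_image.1 hy
      exact ⟨r, fun _ => ⟨hr, h⟩⟩
    · exact ⟨0, fun h => absurd h hy⟩
  choose r hr using hrep
  rw [← Finset.card_sigma]
  refine Finset.card_le_card_of_injOn (fun s => s.1 * r s.2) ?_ ?_
  · rintro ⟨a, y⟩ hs
    simp only [Finset.mem_coe, Finset.mem_sigma] at hs
    exact Finset.mul_mem_mul hs.1 (hr y (Finset.mem_filter.1 hs.2).1).1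
  · rintro ⟨a, y⟩ hs ⟨b, z⟩ ht heq
    simp only [Finset.mem_coe, Finset.mem_sigma] at hs ht heq
    obtain ⟨hyX, hay, hynot⟩ := Finset.mem_filter.1 hs.2
    obtain ⟨hzX, hbz, hznot⟩ := Finset.mem_filter.1 ht.2
    have ha0 : a ≠ 0 := fun h => hA (h ▸ hs.1)
    have habs : |a| * y = |b| * z := by
      rw [← (hr y hyX).2, ← (hr z hzX).2, ← abs_mul, ← abs_mul, heq]
    have hab : |a| = |b| := by
      rcases lt_trichotomy |a| |b| with h | h | h
      · exact absurd habs.symm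
          (hynot _ (Finset.mem_image_of_mem _ ht.1) z hzX h (h.trans_le hbz))
      · exact h
      · exact absurd habs
          (hznot _ (Finset.mem_image_of_mem _ hs.1) y hyX h (h.trans_le hay))
    have hyz : y = z := by
      rw [← hab] at habs
      exact mul_left_cancel₀ (abs_ne_zero.2 ha0) habs
    subst hyz
    have hr0 : r y ≠ 0 := fun h => hA (h ▸ (hr y hyX).1)
    rw [mul_right_cancel₀ hr0 heq]

theorem valuationVector_sub_mem_span {X : Finset ℚ} {x : ℚ} (hx : 0 < x) :
    ∀ y ∈ X, x ≤ y → valuationVector y - valuationVector x ∈ Submodule.span ℚ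
      (Set.image (fun w => valuationVector w - valuationVector x)
        ((extremalPartners X x).erase x : Set ℚ)) := by
  classical
  set V := Submodule.span ℚ (Set.image (fun w => valuationVector w - valuationVector x)
    ((extremalPartners X x).erase x : Set ℚ))
  by_contra! hcon
  obtain ⟨y₀, hy₀X, hxy₀, hy₀⟩ := hcon
  obtain ⟨y, hy, hmin⟩ := Finset.exists_min_image
    {y ∈ X | x ≤ y ∧ valuationVector y - valuationVector x ∉ V} id
    ⟨y₀, Finset.mem_filter.2 ⟨hy₀X, hxy₀, hy₀⟩⟩
  obtain ⟨hyX, hxy, hyV⟩ := Finset.mem_filter.1 hy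
  have hyx : y ≠ x := by
    rintro rfl
    exact hyV (by rw [sub_self]; exact V.zero_mem)
  have hynot : y ∉ extremalPartners X x := fun h => hyV <| Submodule.subset_span <|
    Set.mem_image_of_mem _ <| Finset.mem_coe.2 <| Finset.mem_erase.2 ⟨hyx, h⟩
  simp only [extremalPartners, Finset.mem_filter, not_and, not_forall, not_not] at hynot
  obtain ⟨u, huX, v, hvX, hxu, hxv, huv⟩ := hynot hyX hxy
  have hsmall : ∀ a b, a ∈ X → x < a → x < b → a * b = x * y →
      valuationVector a - valuationVector x ∈ V := by
    intro a b haX hxa hxb hab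
    by_contra hnot
    have hle := hmin a (Finset.mem_filter.2 ⟨haX, hxa.le, hnot⟩)
    simp only [id] at hle
    nlinarith [mul_pos (hx.trans hxa) (sub_pos.2 hxb)]
  have h1 := hsmall u v huX hxu hxv huv
  have h2 := hsmall v u hvX hxv hxu (by rw [mul_comm, huv])
  have h3 := congrArg valuationVector huv
  rw [valuationVector_mul (hx.trans hxu).ne' (hx.trans hxv).ne',
    valuationVector_mul hx.ne' (hx.trans_le hxy).ne'] at h3
  refine hyV ?_
  have h4 := V.add_mem h1 h2
  rwa [show valuationVector u - valuationVector x + (valuationVector v - valuationVector x) =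
    valuationVector y - valuationVector x by
      rw [sub_add_sub_comm, h3]; abel] at h4

/-- A set of small doubling has a large subset whose multiplicative rank is less than the doubling
constant. -/
theorem exists_large_subset_determined_by_primes {A : Finset ℚ} (hA0 : (0 : ℚ) ∉ A)
    (hA : A.Nonempty) {K : ℕ} (hAA : #(A * A) ≤ K * #A) :
    ∃ B ⊆ A, #A ≤ K * #B ∧ ∃ P : Finset ℕ, #P ≤ K - 1 ∧ (∀ p ∈ P, p.Prime) ∧
      ∀ (k : ℕ) (x y : Fin k → ℚ), (∀ i, x i ∈ B) → (∀ i, y i ∈ B) →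
        (∀ p ∈ P, padicNorm p (∏ i, x i) = padicNorm p (∏ i, y i)) →
        |∏ i, x i| = |∏ i, y i| := by
  classical
  set X := A.image abs
  have hne : ∀ a ∈ A, a ≠ 0 := fun a ha h => hA0 (h ▸ ha)
  set T := {a ∈ A | #(extremalPartners X |a|) ≤ K} with hT
  have hTcard : #A ≤ K * #T := by
    have h1 := (sum_card_extremalPartners_le hA0).trans hAA
    rw [← Finset.sum_filter_add_sum_filter_not A fun a => #(extremalPartners X |a|) ≤ K] at h1
    have h2 : #T • 1 ≤ ∑ a ∈ T, #(extremalPartners X |a|) :=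
      Finset.card_nsmul_le_sum _ _ _ fun a ha => Finset.card_pos.2
        ⟨_, self_mem_extremalPartners (Finset.mem_image_of_mem _ (Finset.mem_filter.1 ha).1)
          (abs_pos.2 (hne a (Finset.mem_filter.1 ha).1))⟩
    have h3 : #{a ∈ A | ¬ #(extremalPartners X |a|) ≤ K} • (K + 1) ≤
        ∑ a ∈ A with ¬ #(extremalPartners X |a|) ≤ K, #(extremalPartners X |a|) :=
      Finset.card_nsmul_le_sum _ _ _ fun a ha => not_le.1 (Finset.mem_filter.1 ha).2
    have h4 := Finset.card_filter_add_card_filter_not (s := A)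
      fun a => #(extremalPartners X |a|) ≤ K
    rw [smul_eq_mul] at h2 h3
    rw [← hT] at h1 h4
    rw [← h4] at h1 ⊢
    nlinarith
  have hTne : T.Nonempty := by
    rw [Finset.nonempty_iff_ne_empty]
    intro h
    rw [h, Finset.card_empty, mul_zero] at hTcard
    exact hA.card_pos.ne' (Nat.le_zero.1 hTcard)
  obtain ⟨a, haT, hmin⟩ := Finset.exists_min_image T abs hTne
  obtain ⟨haA, haK⟩ := Finset.mem_filter.1 haT
  have hapos : 0 < |a| := abs_pos.2 (hne a haA)
  set D : Finset (ℕ → ℚ) := ((extremalPartners X |a|).erase |a|).image fun w =>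
    valuationVector w - valuationVector a with hD
  have hspan : ∀ b ∈ A, |a| ≤ |b| →
      valuationVector b - valuationVector a ∈ Submodule.span ℚ (D : Set (ℕ → ℚ)) := by
    intro b hb hab
    have := valuationVector_sub_mem_span hapos |b| (Finset.mem_image_of_mem abs hb) hab
    rwa [valuationVector_abs b, valuationVector_abs a, ← Finset.coe_image] at this
  have hDcard : #D ≤ K - 1 := by
    refine Finset.card_image_le.trans ?_
    rw [Finset.card_erase_of_mem
      (self_mem_extremalPartners (Finset.mem_image_of_mem _ haA) hapos)]
    exact Nat.sub_le_sub_right haK 1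
  obtain ⟨P, hPcard, hP⟩ := exists_determining_coordinates (K - 1)
    (Submodule.span ℚ (D : Set (ℕ → ℚ))) inferInstance
    ((finrank_span_finset_le_card D).trans hDcard)
  refine ⟨{b ∈ A | |a| ≤ |b|}, Finset.filter_subset _ _, ?_, P.filter Nat.Prime,
    (Finset.card_filter_le _ _).trans hPcard, fun p hp => (Finset.mem_filter.1 hp).2, ?_⟩
  · refine hTcard.trans (Nat.mul_le_mul_left _ (Finset.card_le_card fun b hb => ?_))
    exact Finset.mem_filter.2 ⟨(Finset.mem_filter.1 hb).1, hmin b hb⟩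
  · intro k x y hx hy hxy
    have hx' := fun i => Finset.mem_filter.1 (hx i)
    have hy' := fun i => Finset.mem_filter.1 (hy i)
    have hpx : ∏ i, x i ≠ 0 := Finset.prod_ne_zero_iff.2 fun i _ => hne _ (hx' i).1
    have hpy : ∏ i, y i ≠ 0 := Finset.prod_ne_zero_iff.2 fun i _ => hne _ (hy' i).1
    refine abs_eq_of_valuationVector_eq hpx hpy (sub_eq_zero.1 (hP _ ?_ fun p hp => ?_))
    · rw [valuationVector_prod _ _ fun i _ => hne _ (hx' i).1,
        valuationVector_prod _ _ fun i _ => hne _ (hy' i).1, ← Finset.sum_sub_distrib]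
      refine Submodule.sum_mem _ fun i _ => ?_
      have := Submodule.sub_mem _ (hspan _ (hx' i).1 (hx' i).2) (hspan _ (hy' i).1 (hy' i).2)
      rwa [sub_sub_sub_cancel_right] at this
    · rw [Pi.sub_apply, sub_eq_zero]
      simp only [valuationVector]
      split_ifs with hpp
      · have h := hxy p (Finset.mem_filter.2 ⟨hp, hpp⟩)
        rw [padicNorm.eq_zpow_of_nonzero hpx, padicNorm.eq_zpow_of_nonzero hpy] at h
        have := zpow_right_injective₀ (by exact_mod_cast hpp.pos) (by exact_mod_cast hpp.ne_one) h
        rw [neg_injective this]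
      · rfl

theorem kfoldProd_mono {k : ℕ} {B C : Finset ℚ} (h : B ⊆ C) : kfoldProd k B ⊆ kfoldProd k C :=
  Finset.image_subset_image (Fintype.piFinset_subset _ _ fun _ => h)

/-- Cauchy–Schwarz: a set of small multiplicative energy has many products. -/
theorem card_pow_sq_le_card_kfoldProd_mul_energy (k : ℕ) (B : Finset ℚ) :
    (#B ^ k) ^ 2 ≤ #(kfoldProd k (B.image fun a => a + 1)) * shiftedEnergy k B := by
  classical
  set S := Fintype.piFinset fun _ : Fin k => B with hS
  set t := kfoldProd k (B.image fun a => a + 1)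
  let g : (Fin k → ℚ) → ℚ := fun f => ∏ i, (1 + f i)
  have hmaps : ∀ f ∈ S, g f ∈ t := by
    intro f hf
    refine Finset.mem_image.2 ⟨fun i => f i + 1, ?_, ?_⟩
    · exact Fintype.mem_piFinset.2 fun i => Finset.mem_image_of_mem _ (Fintype.mem_piFinset.1 hf i)
    · exact Finset.prod_congr rfl fun i _ => add_comm _ _
  have hcard : #S = #B ^ k := by simp [hS, Fintype.card_piFinset]
  have henergy : ∑ y ∈ t, #{f ∈ S | g f = y} ^ 2 ≤ shiftedEnergy k B := by
    have hmaps₂ : ∀ x ∈ shiftedSolutions k fun _ => B, g (fun i => x (.inl i)) ∈ t := by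
      intro x hx
      rw [shiftedSolutions, Finset.mem_filter, Fintype.mem_piFinset] at hx
      exact hmaps _ (Fintype.mem_piFinset.2 fun i => hx.1 _)
    rw [shiftedEnergy, Finset.card_eq_sum_card_fiberwise hmaps₂]
    refine Finset.sum_le_sum fun y _ => ?_
    rw [sq, ← Finset.card_product]
    refine Finset.card_le_card_of_injOn (fun fg => Sum.elim fg.1 fg.2) ?_ ?_
    · rintro ⟨f, h⟩ hfh
      simp only [Finset.coe_product, Set.mem_prod, Finset.mem_coe, Finset.mem_filter] at hfh
      obtain ⟨⟨hf, hfy⟩, hh, hhy⟩ := hfh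
      rw [hS, Fintype.mem_piFinset] at hf hh
      simp only [shiftedSolutions, Finset.coe_filter, Set.mem_ofPred_eq, Finset.mem_filter,
        Fintype.mem_piFinset, Sum.elim_inl, Sum.elim_inr]
      refine ⟨⟨?_, hfy.trans hhy.symm⟩, hfy⟩
      rintro (i | i)
      exacts [hf i, hh i]
    · rintro ⟨f, h⟩ _ ⟨f', h'⟩ _ heq
      exact Prod.ext (funext fun i => congrFun heq (.inl i)) (funext fun i => congrFun heq (.inr i))
  calc (#B ^ k) ^ 2 = (∑ y ∈ t, #{f ∈ S | g f = y}) ^ 2 := by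
        rw [← hcard, Finset.card_eq_sum_card_fiberwise hmaps]
    _ ≤ #t * ∑ y ∈ t, #{f ∈ S | g f = y} ^ 2 := sq_sum_le_card_mul_sum_sq
    _ ≤ _ := Nat.mul_le_mul_left _ henergy

/-- Pigeonhole: a large part of `B` has constant sign and, for each `p ∈ P`, lies on one side of
the `p`-adic unit circle. -/
theorem exists_large_separated_subset (B : Finset ℚ) (P : Finset ℕ) :
    ∃ C ⊆ B, #B ≤ 2 * 3 ^ #P * #C ∧ ((∀ a ∈ C, 0 < a) ∨ ∀ a ∈ C, a ≤ 0) ∧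
      ∀ p ∈ P, (∀ a ∈ C, padicNorm p a < 1) ∨ (∀ a ∈ C, padicNorm p a = 1) ∨
        ∀ a ∈ C, 1 < padicNorm p a := by
  classical
  let σ : ℚ → Bool × (P → SignType) := fun a =>
    (decide (0 < a), fun p => SignType.sign (padicNorm p a - 1))
  obtain ⟨y, -, hy⟩ := Finset.exists_max_image (univ : Finset (Bool × (P → SignType)))
    (fun y => #{a ∈ B | σ a = y}) ⟨(true, fun _ => 0), Finset.mem_univ _⟩
  have hσ : ∀ a ∈ ({a ∈ B | σ a = y} : Finset ℚ), decide (0 < a) = y.1 ∧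
      ∀ p : P, SignType.sign (padicNorm p a - 1) = y.2 p := by
    intro a ha
    have h := (Finset.mem_filter.1 ha).2
    exact ⟨congrArg Prod.fst h, fun p => congrFun (congrArg Prod.snd h) p⟩
  refine ⟨{a ∈ B | σ a = y}, Finset.filter_subset _ _, ?_, ?_, ?_⟩
  · have h := Finset.card_le_mul_card_image_of_maps_to (s := B) (t := univ) (f := σ)
      (fun _ _ => Finset.mem_univ _) _ fun z hz => hy z hz
    rw [Finset.card_univ, Fintype.card_prod, Fintype.card_fun, Fintype.card_coe,
      Fintype.card_bool, show Fintype.card SignType = 3 from rfl] at h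
    rwa [mul_comm]
  · cases hy1 : y.1
    · exact Or.inr fun a ha => by simpa [hy1] using (hσ a ha).1
    · exact Or.inl fun a ha => by simpa [hy1] using (hσ a ha).1
  · intro p hp
    have hs : ∀ a ∈ ({a ∈ B | σ a = y} : Finset ℚ),
        SignType.sign (padicNorm p a - 1) = y.2 ⟨p, hp⟩ := fun a ha => (hσ a ha).2 ⟨p, hp⟩
    cases hy2 : y.2 ⟨p, hp⟩ <;> rw [hy2] at hs
    · exact Or.inr (Or.inl fun a ha => sub_eq_zero.1 (sign_eq_zero_iff.1 (hs a ha)))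
    · exact Or.inl fun a ha => sub_neg.1 (sign_eq_neg_one_iff.1 (hs a ha))
    · exact Or.inr (Or.inr fun a ha => sub_pos.1 (sign_eq_one_iff.1 (hs a ha)))

theorem eq_of_abs_prod_eq {k : ℕ} {C : Finset ℚ}
    (hC : (∀ a ∈ C, 0 < a) ∨ ∀ a ∈ C, a ≤ 0) {x y : Fin k → ℚ} (hx : ∀ i, x i ∈ C)
    (hy : ∀ i, y i ∈ C) (h : |∏ i, x i| = |∏ i, y i|) : ∏ i, x i = ∏ i, y i := by
  rw [Finset.abs_prod, Finset.abs_prod] at h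
  rcases hC with hC | hC
  · simpa only [abs_of_pos (hC _ (hx _)), abs_of_pos (hC _ (hy _))] using h
  · simp only [abs_of_nonpos (hC _ (hx _)), abs_of_nonpos (hC _ (hy _)), Finset.prod_neg] at h
    exact mul_left_cancel₀ (pow_ne_zero _ (by norm_num)) h

theorem two_mul_mul_pow_le {k K d : ℕ} (hk : 2 ≤ k) (hK : 0 < K) (hd : d ≤ K - 1) :
    2 * (K : ℝ) * (12 * k ^ 2) ^ d ≤ (8 * (k : ℝ) ^ 4) ^ K := by
  have hk2 : (2 : ℝ) ≤ k := by exact_mod_cast hk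
  have hsq : (4 : ℝ) ≤ k ^ 2 := by nlinarith
  have hbig : (2 : ℝ) * (12 * k ^ 2) ≤ 8 * k ^ 4 := by nlinarith
  obtain ⟨n, rfl⟩ : ∃ n, K = n + 1 := ⟨K - 1, by omega⟩
  have hn : ((n + 1 : ℕ) : ℝ) ≤ 2 ^ (n + 1) := by exact_mod_cast Nat.lt_two_pow_self.le
  calc 2 * ((n + 1 : ℕ) : ℝ) * (12 * k ^ 2) ^ d
      ≤ 2 * 2 ^ (n + 1) * (12 * (k : ℝ) ^ 2) ^ n := by
        have : (12 * (k : ℝ) ^ 2) ^ d ≤ (12 * (k : ℝ) ^ 2) ^ n :=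
          pow_le_pow_right₀ (by linarith) (by omega)
        gcongr
    _ = 4 * (2 * (12 * (k : ℝ) ^ 2)) ^ n := by
        rw [mul_pow 2]
        ring
    _ ≤ (8 * (k : ℝ) ^ 4) * (8 * (k : ℝ) ^ 4) ^ n := by
        gcongr
        nlinarith
    _ = _ := (pow_succ' _ _).symm

theorem card_kfoldProd_add_one_lower_bound {A : Finset ℚ} (hA0 : (0 : ℚ) ∉ A)
    (hA1 : (-1 : ℚ) ∉ A) {K : ℕ} (hK : 0 < K) (hAA : #(A * A) ≤ K * #A) {k : ℕ} (hk : 2 ≤ k) :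
    (#A : ℝ) ^ k ≤ (8 * (k : ℝ) ^ 4) ^ (k * K) * #(kfoldProd k (A.image fun a => a + 1)) := by
  rcases A.eq_empty_or_nonempty with rfl | hA
  · rw [Finset.card_empty, Nat.cast_zero, zero_pow (by omega)]
    positivity
  obtain ⟨B, hBA, hBcard, P, hPcard, hPprime, hdet⟩ :=
    exists_large_subset_determined_by_primes hA0 hA hAA
  obtain ⟨C, hCB, hCcard, hCsign, hCsep⟩ := exists_large_separated_subset B P
  have hCA := hCB.trans hBA
  have henergy := shiftedEnergy_le_of_determining_primes hk (fun h => hA1 (hCA h))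
    (fun h => hA0 (hCA h)) P hPprime hCsep fun x hx hnorm =>
      eq_of_abs_prod_eq hCsign (fun i => hx _) (fun i => hx _) <|
        hdet k _ _ (fun i => hCB (hx _)) (fun i => hCB (hx _)) fun p hp => by
          have : Fact p.Prime := ⟨hPprime p hp⟩
          rw [padicNorm_prod, padicNorm_prod, hnorm p hp]
  have hAC : (#A : ℝ) ≤ 2 * K * 3 ^ #P * #C := by
    have h := hBcard.trans (Nat.mul_le_mul_left K hCcard)
    calc (#A : ℝ) ≤ ((K * (2 * 3 ^ #P * #C) : ℕ) : ℝ) := by exact_mod_cast h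
      _ = _ := by push_cast; ring
  have hCpos : (0 : ℝ) < #C := by
    have hApos : (0 : ℝ) < #A := by exact_mod_cast hA.card_pos
    exact pos_of_mul_pos_right (hApos.trans_le hAC) (by positivity)
  have hsub : (#(kfoldProd k (C.image fun a => a + 1)) : ℝ) ≤
      #(kfoldProd k (A.image fun a => a + 1)) := by
    exact_mod_cast Finset.card_le_card (kfoldProd_mono (Finset.image_subset_image hCA))
  have hCS : ((#C : ℝ) ^ k) ^ 2 ≤
      #(kfoldProd k (C.image fun a => a + 1)) * shiftedEnergy k C := by
    exact_mod_cast card_pow_sq_le_card_kfoldProd_mul_energy k C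
  have hC : (#C : ℝ) ^ k ≤ ((4 * k ^ 2) ^ #P) ^ k * #(kfoldProd k (A.image fun a => a + 1)) := by
    refine le_of_mul_le_mul_right ?_ (pow_pos hCpos k)
    calc (#C : ℝ) ^ k * #C ^ k = ((#C : ℝ) ^ k) ^ 2 := (sq _).symm
      _ ≤ #(kfoldProd k (A.image fun a => a + 1)) * ((4 * k ^ 2) ^ #P * #C : ℝ) ^ k :=
          hCS.trans (mul_le_mul hsub henergy (Nat.cast_nonneg _) (Nat.cast_nonneg _))
      _ = _ := by rw [mul_pow]; ring
  calc (#A : ℝ) ^ k ≤ (2 * K * 3 ^ #P * #C) ^ k := pow_le_pow_left₀ (Nat.cast_nonneg _) hAC k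
    _ = (2 * K * 3 ^ #P) ^ k * #C ^ k := mul_pow _ _ _
    _ ≤ (2 * K * 3 ^ #P) ^ k *
        (((4 * k ^ 2) ^ #P) ^ k * #(kfoldProd k (A.image fun a => a + 1))) :=
        mul_le_mul_of_nonneg_left hC (by positivity)
    _ = (2 * K * (12 * k ^ 2) ^ #P) ^ k * #(kfoldProd k (A.image fun a => a + 1)) := by
        rw [← mul_assoc, ← mul_pow, mul_assoc _ (3 ^ #P : ℝ), ← mul_pow]
        ring_nf
    _ ≤ _ := by
        refine mul_le_mul_of_nonneg_right ?_ (Nat.cast_nonneg _)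
        rw [mul_comm k K, pow_mul]
        exact pow_le_pow_left₀ (by positivity) (two_mul_mul_pow_le hk hK hPcard) k

theorem product_of_general_shift_lower_bound
    (A : Finset ℚ) (hA0 : (0 : ℚ) ∉ A)
    (K : ℕ) (hK : 0 < K) (hAA : (A * A).card ≤ K * A.card)
    (k : ℕ) (hk : 2 ≤ k)
    (lam : ℚ) (hlam : lam ≠ 0) (hlamA : -lam ∉ A) :
    (A.card : ℝ) ^ k / (8 * (k : ℝ) ^ 4) ^ (k * K) ≤
      ((kfoldProd k (A.image fun a => a + lam)).card : ℝ) := by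
  have hkpos : (0 : ℝ) < k := by exact_mod_cast (by omega : 0 < k)
  set A' := A.image fun a => a / lam with hA'
  have hcard : #A' = #A :=
    Finset.card_image_of_injective _ fun a b h => (div_left_inj' hlam).1 h
  have h0 : (0 : ℚ) ∉ A' := by
    rw [hA', Finset.mem_image]
    rintro ⟨a, ha, h⟩
    rw [div_eq_zero_iff, or_iff_left hlam] at h
    exact hA0 (h ▸ ha)
  have h1 : (-1 : ℚ) ∉ A' := by
    rw [hA', Finset.mem_image]
    rintro ⟨a, ha, h⟩
    rw [div_eq_iff hlam, neg_one_mul] at h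
    exact hlamA (h ▸ ha)
  have hmul : #(A' * A') ≤ K * #A' := by
    rw [hcard]
    refine le_trans (Finset.card_le_card fun z hz => ?_)
      ((Finset.card_image_le (s := A * A) (f := fun a => a / (lam * lam))).trans hAA)
    obtain ⟨x, hx, y, hy, rfl⟩ := Finset.mem_mul.1 hz
    obtain ⟨a, ha, rfl⟩ := Finset.mem_image.1 hx
    obtain ⟨b, hb, rfl⟩ := Finset.mem_image.1 hy
    exact Finset.mem_image.2 ⟨a * b, Finset.mul_mem_mul ha hb, (div_mul_div_comm _ _ _ _).symm⟩
  have hprod : #(kfoldProd k (A'.image fun a => a + 1)) ≤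
      #(kfoldProd k (A.image fun a => a + lam)) := by
    refine le_trans (Finset.card_le_card fun z hz => ?_) (Finset.card_image_le
      (s := kfoldProd k (A.image fun a => a + lam)) (f := fun z => z / lam ^ k))
    obtain ⟨f, hf, rfl⟩ := Finset.mem_image.1 hz
    rw [Fintype.mem_piFinset] at hf
    refine Finset.mem_image.2 ⟨∏ i, f i * lam, Finset.mem_image.2
      ⟨fun i => f i * lam, Fintype.mem_piFinset.2 fun i => ?_, rfl⟩, ?_⟩
    · obtain ⟨b, hb, hbf⟩ := Finset.mem_image.1 (hf i)
      obtain ⟨a, ha, rfl⟩ := Finset.mem_image.1 hb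
      refine Finset.mem_image.2 ⟨a, ha, ?_⟩
      rw [← hbf, add_mul, div_mul_cancel₀ _ hlam, one_mul]
    · simp only [Finset.prod_mul_distrib, Finset.prod_const, Finset.card_univ, Fintype.card_fin]
      exact mul_div_cancel_right₀ _ (pow_ne_zero k hlam)
  rw [div_le_iff₀' (by positivity), ← hcard]
  exact (card_kfoldProd_add_one_lower_bound h0 h1 hK hmul hk).trans
    (mul_le_mul_of_nonneg_left (by exact_mod_cast hprod) (by positivity))
end

section
/- Let K and k be positive integers with k ≥ 2. There exists N = N(K) such that the following holds. Let A be a finite set of positive integers with |A| ≥ N and |AA| ≤ K|A|, and let u be a nonzero integer coprime to every element of A and with -u ∉ A. Then the k-fold product set of the shift A+u satisfies |(A+u)^{(k)}| ≥ |A|^k / (2k^2)^{kK}. -/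
open Finset Pointwise

/-- The `k`-fold product set of a finite set `B` of integers:
`B^(k) = {b₁ ⋯ b_k : bᵢ ∈ B}`. -/
def kfoldProdInt (k : ℕ) (B : Finset ℤ) : Finset ℤ :=
  (Fintype.piFinset fun _ : Fin k => B).image fun f => ∏ i, f i

open Module in
theorem finrank_vectorSpan_insert_le_card_new_sums {V : Type*} [AddCommGroup V] [Module ℚ V]
    [DecidableEq V] (φ : V →ₗ[ℚ] ℝ) {a : V} {s : Finset V} (h : ∀ x ∈ s, φ x < φ a) :
    finrank ℚ (vectorSpan ℚ (↑(insert a s) : Set V)) ≤ #{b ∈ s | a + b ∉ s + s} := by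
  set I := {b ∈ s | a + b ∉ s + s} with hI
  set W := Submodule.span ℚ ((I.image fun b => b - a : Finset V) : Set V)
  have key : ∀ b ∈ s, b - a ∈ W := by
    classical
    by_contra! hcon
    obtain ⟨b₀, hb₀, hb₀W⟩ := hcon
    obtain ⟨b, hb, hmax⟩ := Finset.exists_max_image {b ∈ s | b - a ∉ W} φ
      ⟨b₀, by simp [hb₀, hb₀W]⟩
    rw [Finset.mem_filter] at hb
    have hmem : ∀ c ∈ s, φ b < φ c → c - a ∈ W := by
      intro c hc hlt
      by_contra hcW
      exact absurd (hmax c (by simp [hc, hcW])) (not_le.mpr hlt)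
    by_cases hbI : b ∈ I
    · exact hb.2 (Submodule.subset_span (Finset.mem_coe.mpr (Finset.mem_image_of_mem _ hbI)))
    · have hsum : a + b ∈ s + s := by
        by_contra hnot
        exact hbI (by simp [hI, hb.1, hnot])
      obtain ⟨c, hc, e, he, hce⟩ := Finset.mem_add.mp hsum
      have hφ : φ c + φ e = φ a + φ b := by rw [← map_add, hce, map_add]
      have hca := h c hc
      have hea := h e he
      have hba : b - a = (c - a) + (e - a) := by
        rw [sub_add_sub_comm, hce]; abel
      exact hb.2 (hba ▸ W.add_mem (hmem c hc (by linarith)) (hmem e he (by linarith)))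
  have hle : vectorSpan ℚ (↑(insert a s) : Set V) ≤ W := by
    rw [vectorSpan_eq_span_vsub_set_right ℚ (p := a) (by simp), Submodule.span_le]
    rintro _ ⟨b, hb, rfl⟩
    rcases Finset.mem_insert.mp (Finset.mem_coe.mp hb) with rfl | hb
    · simp
    · exact key b hb
  calc _ ≤ finrank ℚ W := Submodule.finrank_mono hle
    _ ≤ #(I.image fun b => b - a) := finrank_span_finset_le_card _
    _ ≤ #I := Finset.card_image_le

open Module in
/-- Freiman's lemma: a finite set of affine dimension at least `e` satisfies
`(e + 1) |A| - e (e + 1) / 2 ≤ |A + A|`. -/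
theorem freiman_lemma {V : Type*} [AddCommGroup V] [Module ℚ V] [DecidableEq V]
    (φ : V →ₗ[ℚ] ℝ) (A : Finset V) (hφ : Set.InjOn φ A) (e : ℕ)
    (he : e ≤ finrank ℚ (vectorSpan ℚ (A : Set V))) :
    2 * (e + 1) * #A ≤ 2 * #(A + A) + e * (e + 1) := by
  induction A using Finset.induction_on_max_value φ generalizing e with
  | empty => simp
  | insert a s has hmax ih =>
    have hlt : ∀ x ∈ s, φ x < φ a := fun x hx => lt_of_le_of_ne (hmax x hx) fun heq =>
      has (hφ (by simp [hx]) (by simp) heq ▸ hx)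
    have ih' := ih (hφ.mono (by simp))
    have hsub : s + s ⊆ insert a s + insert a s :=
      Finset.add_subset_add (Finset.subset_insert _ _) (Finset.subset_insert _ _)
    have haa : a + a ∉ s + s := by
      intro hmem
      obtain ⟨c, hc, d, hd, hcd⟩ := Finset.mem_add.mp hmem
      have := congrArg φ hcd
      simp only [map_add] at this
      linarith [hlt c hc, hlt d hd]
    -- sums `a + b` with `b ∈ t` outside of `s + s` are new
    have hnew : ∀ t ⊆ s, (∀ b ∈ t, a + b ∉ s + s) →
        #(s + s) + (#t + 1) ≤ #(insert a s + insert a s) := by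
      intro t hts ht
      have hat : a ∉ t := fun hmem => has (hts hmem)
      rw [← Finset.card_insert_of_notMem hat,
        ← Finset.card_image_of_injective (insert a t) (add_right_injective a),
        ← Finset.card_union_of_disjoint]
      · refine Finset.card_le_card (Finset.union_subset hsub ?_)
        intro x hx
        obtain ⟨b, hb, rfl⟩ := Finset.mem_image.mp hx
        exact Finset.add_mem_add (by simp) (Finset.insert_subset_insert a hts hb)
      · rw [Finset.disjoint_right]
        intro x hx
        obtain ⟨b, hb, rfl⟩ := Finset.mem_image.mp hx
        rcases Finset.mem_insert.mp hb with rfl | hb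
        exacts [haa, ht b hb]
    rw [Finset.card_insert_of_notMem has]
    by_cases hes : e ≤ finrank ℚ (vectorSpan ℚ (s : Set V))
    · have h₁ := ih' e hes
      have h₂ := hnew {b ∈ s | a + b ∉ s + s} (Finset.filter_subset _ _) (by simp)
      have h₃ := he.trans (finrank_vectorSpan_insert_le_card_new_sums φ hlt)
      nlinarith
    · have hspan : a ∉ affineSpan ℚ (s : Set V) := by
        intro hmem
        rw [Finset.coe_insert, ← direction_affineSpan,
          affineSpan_insert_eq_affineSpan ℚ hmem,
          direction_affineSpan] at he
        exact hes he
      have hall : ∀ b ∈ s, a + b ∉ s + s := by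
        intro b hb hmem
        obtain ⟨c, hc, d, hd, hcd⟩ := Finset.mem_add.mp hmem
        have hac : a = (c - b) +ᵥ d := by
          rw [vadd_eq_add, eq_comm, sub_add_eq_add_sub, hcd]; abel
        apply hspan
        rw [hac]
        exact AffineSubspace.vadd_mem_of_mem_direction
          (AffineSubspace.vsub_mem_direction (subset_affineSpan ℚ _ hc) (subset_affineSpan ℚ _ hb))
          (subset_affineSpan ℚ _ hd)
      have hins : finrank ℚ (vectorSpan ℚ (↑(insert a s) : Set V)) ≤
          finrank ℚ (vectorSpan ℚ (s : Set V)) + 1 := by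
        rw [Finset.coe_insert]
        have : FiniteDimensional ℚ (vectorSpan ℚ (s : Set V)) :=
          finiteDimensional_vectorSpan_of_finite ℚ s.finite_toSet
        exact finrank_vectorSpan_insert_le_set ℚ (s : Set V) a
      obtain ⟨e, rfl⟩ : ∃ e', e = e' + 1 := ⟨e - 1, by omega⟩
      have h₁ := ih' e (by omega)
      have h₂ := hnew s subset_rfl hall
      nlinarith

/-- The `ℓ^k` norm of a nonnegative function on a finite type. -/
noncomputable def powNorm {X : Type*} [Fintype X] (k : ℕ) (h : X → ℝ) : ℝ :=
  (∑ x, h x ^ k) ^ (1 / (k : ℝ))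

section powNorm

variable {X : Type*} [Fintype X] {k : ℕ} {f g : X → ℝ}

theorem powNorm_nonneg (hf : ∀ x, 0 ≤ f x) : 0 ≤ powNorm k f :=
  Real.rpow_nonneg (Finset.sum_nonneg fun x _ => pow_nonneg (hf x) k) _

theorem powNorm_pow (hk : k ≠ 0) (hf : ∀ x, 0 ≤ f x) : powNorm k f ^ k = ∑ x, f x ^ k := by
  rw [powNorm, one_div, Real.rpow_inv_natCast_pow _ hk]
  exact Finset.sum_nonneg fun x _ => pow_nonneg (hf x) k

theorem powNorm_mono (hf : ∀ x, 0 ≤ f x) (hfg : ∀ x, f x ≤ g x) :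
    powNorm k f ≤ powNorm k g := by
  refine Real.rpow_le_rpow (Finset.sum_nonneg fun x _ => pow_nonneg (hf x) k) ?_ (by positivity)
  exact Finset.sum_le_sum fun x _ => pow_le_pow_left₀ (hf x) (hfg x) k

theorem powNorm_const_mul (hk : k ≠ 0) {c : ℝ} (hc : 0 ≤ c) (hf : ∀ x, 0 ≤ f x) :
    powNorm k (fun x => c * f x) = c * powNorm k f := by
  rw [powNorm, powNorm]
  simp_rw [mul_pow]
  rw [← Finset.mul_sum, Real.mul_rpow (pow_nonneg hc k)
    (Finset.sum_nonneg fun x _ => pow_nonneg (hf x) k), one_div, Real.pow_rpow_inv_natCast hc hk]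

theorem powNorm_add_le (hk : 1 ≤ k) (hf : ∀ x, 0 ≤ f x) (hg : ∀ x, 0 ≤ g x) :
    powNorm k (fun x => f x + g x) ≤ powNorm k f + powNorm k g := by
  have := Real.Lp_add_le_of_nonneg (s := Finset.univ) (p := (k : ℝ)) (by exact_mod_cast hk)
    (fun x _ => hf x) (fun x _ => hg x)
  simpa only [powNorm, Real.rpow_natCast] using this

theorem powNorm_sum_le {ι : Type*} (hk : 1 ≤ k) (s : Finset ι) {F : ι → X → ℝ}
    (hF : ∀ i x, 0 ≤ F i x) :
    powNorm k (fun x => ∑ i ∈ s, F i x) ≤ ∑ i ∈ s, powNorm k (F i) := by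
  classical
  induction s using Finset.induction_on with
  | empty =>
    have hk0 : k ≠ 0 := by omega
    simp [powNorm, hk0, Real.zero_rpow]
  | insert i s his ih =>
    simp only [Finset.sum_insert his]
    exact (powNorm_add_le hk (hF i) fun x => Finset.sum_nonneg fun j _ => hF j x).trans
      (by gcongr)

/-- Hölder's inequality with exponents `k` and `k / (k - 1)`. -/
theorem sum_mul_pow_le_powNorm (hk : 2 ≤ k) (hf : ∀ x, 0 ≤ f x) (hg : ∀ x, 0 ≤ g x) :
    ∑ x, f x * g x ^ (k - 1) ≤ powNorm k f * powNorm k g ^ (k - 1) := by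
  have hk1 : (1 : ℝ) < k := by exact_mod_cast hk
  have hk0 : (k : ℝ) ≠ 0 := by positivity
  have hsub : ((k - 1 : ℕ) : ℝ) = k - 1 := by rw [Nat.cast_sub (by omega), Nat.cast_one]
  have hne : (k : ℝ) - 1 ≠ 0 := by linarith
  have hpq := Real.HolderConjugate.conjExponent hk1
  have h := Real.inner_le_Lp_mul_Lq_of_nonneg Finset.univ hpq (fun x _ => hf x)
    (fun x _ => pow_nonneg (hg x) (k - 1))
  have hpow : ∀ x, (g x ^ (k - 1)) ^ Real.conjExponent k = g x ^ k := by
    intro x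
    rw [← Real.rpow_natCast, ← Real.rpow_mul (hg x), ← Real.rpow_natCast, hsub,
      Real.conjExponent, mul_div_cancel₀ _ hne]
  have hexp : 1 / Real.conjExponent (k : ℝ) = 1 / (k : ℝ) * ((k - 1 : ℕ) : ℝ) := by
    rw [hsub, Real.conjExponent]
    field_simp
  simp only [hpow, Real.rpow_natCast] at h
  rwa [hexp, Real.rpow_mul (Finset.sum_nonneg fun x _ => pow_nonneg (hg x) k),
    Real.rpow_natCast] at h

theorem powNorm_le_of_sum_pow_le (hk : 2 ≤ k) (hf : ∀ x, 0 ≤ f x) (hg : ∀ x, 0 ≤ g x) {C : ℝ}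
    (hC : 0 ≤ C) (h : ∑ x, f x ^ k ≤ C * ∑ x, g x * f x ^ (k - 1)) :
    powNorm k f ≤ C * powNorm k g := by
  rcases (powNorm_nonneg (k := k) hf).eq_or_lt with h0 | hpos
  · rw [← h0]
    exact mul_nonneg hC (powNorm_nonneg hg)
  · refine le_of_mul_le_mul_right ?_ (pow_pos hpos (k - 1))
    calc powNorm k f * powNorm k f ^ (k - 1) = powNorm k f ^ k := by
          rw [← pow_succ', Nat.sub_add_cancel (by omega)]
      _ = ∑ x, f x ^ k := powNorm_pow (by omega) hf
      _ ≤ C * ∑ x, g x * f x ^ (k - 1) := h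
      _ ≤ C * (powNorm k g * powNorm k f ^ (k - 1)) := by
          gcongr
          exact sum_mul_pow_le_powNorm hk hg hf
      _ = C * powNorm k g * powNorm k f ^ (k - 1) := by ring

end powNorm

/-- If `∏ (z i + u) = ∏ (w j + u)` with equally many factors and `n`, coprime to `u`, divides all of
the `z i` and `w j` except possibly one of them, then it also divides that one. -/
theorem dvd_of_prod_add_eq_prod_add {ι κ : Type*} [Fintype ι] [Fintype κ] [DecidableEq ι]
    (hcard : Fintype.card ι = Fintype.card κ) {n : ℕ} {u : ℤ} {z : ι → ℤ} {w : κ → ℤ}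
    (h : ∏ i, (z i + u) = ∏ j, (w j + u)) (i₀ : ι) (hu : IsCoprime (n : ℤ) u)
    (hz : ∀ i, i ≠ i₀ → (n : ℤ) ∣ z i) (hw : ∀ j, (n : ℤ) ∣ w j) : (n : ℤ) ∣ z i₀ := by
  have hz' : ∀ i, i ≠ i₀ → (z i : ZMod n) = 0 := fun i hi =>
    (ZMod.intCast_zmod_eq_zero_iff_dvd _ _).mpr (hz i hi)
  have hw' : ∀ j, (w j : ZMod n) = 0 := fun j => (ZMod.intCast_zmod_eq_zero_iff_dvd _ _).mpr (hw j)
  have h' := congrArg (Int.cast : ℤ → ZMod n) h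
  push_cast at h'
  have hcardpos : 0 < Fintype.card ι := Fintype.card_pos_iff.mpr ⟨i₀⟩
  have hL : ∏ i, ((z i : ZMod n) + u) = (z i₀ + u) * (u : ZMod n) ^ (Fintype.card ι - 1) := by
    rw [← Finset.mul_prod_erase _ _ (Finset.mem_univ i₀)]
    congr 1
    rw [Finset.prod_congr rfl fun i hi => by rw [hz' i (Finset.ne_of_mem_erase hi), zero_add]]
    simp [Finset.card_erase_of_mem]
  have hR : ∏ j, ((w j : ZMod n) + u) = u * (u : ZMod n) ^ (Fintype.card ι - 1) := by
    simp [hw', ← hcard, ← pow_succ', Nat.sub_add_cancel hcardpos]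
  rw [hL, hR, add_mul, add_eq_right] at h'
  have hdvd : (n : ℤ) ∣ z i₀ * u ^ (Fintype.card ι - 1) := by
    rw [← ZMod.intCast_zmod_eq_zero_iff_dvd]
    push_cast
    exact h'
  exact hu.pow_right.dvd_of_dvd_mul_right hdvd

theorem exists_factorization_eq_of_prod_add_eq {k : ℕ} (hk : 0 < k) {p : ℕ} (hp : p.Prime)
    {u : ℤ} {z : Fin k ⊕ Fin k → ℤ} (hz0 : ∀ s, z s ≠ 0) (hpz : ∀ s, (p : ℤ) ∣ z s)
    (hu : ∀ s, IsCoprime u (z s))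
    (h : ∏ i, (z (.inl i) + u) = ∏ i, (z (.inr i) + u)) :
    ∃ s t, s ≠ t ∧ (z s).natAbs.factorization p = (z t).natAbs.factorization p := by
  by_contra! hne
  set v : Fin k ⊕ Fin k → ℕ := fun s => (z s).natAbs.factorization p with hv
  obtain ⟨s, -, hs⟩ := Finset.exists_min_image Finset.univ v ⟨.inl ⟨0, hk⟩, by simp⟩
  have hiff : ∀ t m, ((p ^ m : ℕ) : ℤ) ∣ z t ↔ m ≤ v t := by
    intro t m
    rw [Int.natCast_dvd, hp.pow_dvd_iff_le_factorization (by simpa using hz0 t)]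
  have hdvd : ∀ t, t ≠ s → ((p ^ (v s + 1) : ℕ) : ℤ) ∣ z t := fun t ht =>
    (hiff t _).mpr (lt_of_le_of_ne (hs t (Finset.mem_univ t)) (hne s t ht.symm))
  have hcop : IsCoprime ((p ^ (v s + 1) : ℕ) : ℤ) u := by
    push_cast
    exact ((hu s).of_isCoprime_of_dvd_right (hpz s)).symm.pow_left
  have hnot : ¬ ((p ^ (v s + 1) : ℕ) : ℤ) ∣ z s := by
    rw [hiff]; omega
  rcases s with i | i
  · exact hnot (dvd_of_prod_add_eq_prod_add (z := fun j => z (.inl j))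
      (w := fun j => z (.inr j)) rfl h i hcop (fun j hj => hdvd _ (by simpa using hj))
      fun j => hdvd _ (by simp))
  · exact hnot (dvd_of_prod_add_eq_prod_add (z := fun j => z (.inr j))
      (w := fun j => z (.inl j)) rfl h.symm i hcop (fun j hj => hdvd _ (by simpa using hj))
      fun j => hdvd _ (by simp))

/-- The sum of the values of a Dirichlet character over the shift `S + u`. -/
noncomputable def charSum {q : ℕ} (u : ℤ) (S : Finset ℤ) (χ : DirichletCharacter ℂ q) : ℂ :=
  ∑ a ∈ S, χ ((a + u : ℤ) : ZMod q)

/-- The solutions of `∏ (xᵢ + u) = ∏ (yᵢ + u)` with each variable in a prescribed finite set. -/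
def shiftSolutions {k : ℕ} (u : ℤ) (B : Fin k ⊕ Fin k → Finset ℤ) : Finset (Fin k ⊕ Fin k → ℤ) :=
  {z ∈ Fintype.piFinset B | ∏ i, (z (.inl i) + u) = ∏ i, (z (.inr i) + u)}

/-- Reduction modulo `q` maps `A + u` to units and reflects equality of `k`-fold products of
elements of `A + u`. -/
structure IsFaithfulModulus (k : ℕ) (A : Finset ℤ) (u : ℤ) (q : ℕ) : Prop where
  isUnit : ∀ a ∈ A, IsUnit ((a + u : ℤ) : ZMod q)
  prod_eq : ∀ z : Fin k ⊕ Fin k → ℤ, (∀ s, z s ∈ A) →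
    ((∏ i, (z (.inl i) + u) : ℤ) : ZMod q) = ((∏ i, (z (.inr i) + u) : ℤ) : ZMod q) →
    ∏ i, (z (.inl i) + u) = ∏ i, (z (.inr i) + u)

theorem exists_prime_isFaithfulModulus (k : ℕ) (A : Finset ℤ) (u : ℤ) (hu : -u ∉ A) :
    ∃ q : ℕ, q.Prime ∧ IsFaithfulModulus k A u q := by
  let D : (Fin k ⊕ Fin k → ℤ) → ℤ := fun z => ∏ i, (z (.inl i) + u) - ∏ i, (z (.inr i) + u)
  obtain ⟨q, hq, hprime⟩ := Nat.exists_infinite_primes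
    (∑ a ∈ A, (a + u).natAbs + ∑ z ∈ Fintype.piFinset fun _ => A, (D z).natAbs + 1)
  have hsmall : ∀ x : ℤ, x.natAbs < q → (x : ZMod q) = 0 → x = 0 := fun x hx h0 =>
    Int.natAbs_eq_zero.mp (Nat.eq_zero_of_dvd_of_lt
      (Int.natCast_dvd.mp ((ZMod.intCast_zmod_eq_zero_iff_dvd _ _).mp h0)) hx)
  refine ⟨q, hprime, ?_, ?_⟩
  · intro a ha
    have : Fact q.Prime := ⟨hprime⟩
    rw [isUnit_iff_ne_zero]
    intro h0
    have hle := Finset.single_le_sum (f := fun a => (a + u).natAbs) (fun _ _ => Nat.zero_le _) ha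
    have := hsmall (a + u) (by omega) h0
    exact hu (by rwa [← eq_neg_of_add_eq_zero_left this])
  · intro z hz heq
    have hle := Finset.single_le_sum (f := fun z => (D z).natAbs) (fun _ _ => Nat.zero_le _)
      (Fintype.mem_piFinset.mpr hz)
    refine sub_eq_zero.mp (hsmall (D z) (by omega) ?_)
    rw [Int.cast_sub, heq, sub_self]

theorem totient_mul_card_shiftSolutions {k : ℕ} {A : Finset ℤ} {u : ℤ} {q : ℕ} [NeZero q]
    (hq : IsFaithfulModulus k A u q) {B : Fin k ⊕ Fin k → Finset ℤ} (hB : ∀ s, B s ⊆ A) :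
    (q.totient : ℂ) * #(shiftSolutions u B) =
      ∑ χ : DirichletCharacter ℂ q,
        (∏ i, charSum u (B (.inl i)) χ) * ∏ i, star (charSum u (B (.inr i)) χ) := by
  let ψ : DirichletCharacter ℂ q → Fin k ⊕ Fin k → ℤ → ℂ := fun χ s b =>
    Sum.elim (fun _ => χ ((b + u : ℤ) : ZMod q)) (fun _ => star (χ ((b + u : ℤ) : ZMod q))) s
  have hexpand : ∀ χ : DirichletCharacter ℂ q,
      (∏ i, charSum u (B (.inl i)) χ) * ∏ i, star (charSum u (B (.inr i)) χ) =
        ∑ z ∈ Fintype.piFinset B, ∏ s, ψ χ s (z s) := by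
    intro χ
    rw [← Finset.prod_univ_sum, Fintype.prod_sum_type]
    simp [ψ, charSum]
  have horth : ∀ z ∈ Fintype.piFinset B, ∑ χ : DirichletCharacter ℂ q, ∏ s, ψ χ s (z s) =
      if ∏ i, (z (.inl i) + u) = ∏ i, (z (.inr i) + u) then (q.totient : ℂ) else 0 := by
    intro z hz
    have hzA : ∀ s, z s ∈ A := fun s => hB s (Fintype.mem_piFinset.mp hz s)
    have hunit : IsUnit ((∏ i, (z (.inr i) + u) : ℤ) : ZMod q) := by
      rw [Int.cast_prod]
      exact IsUnit.prod_univ_iff.mpr fun i => hq.isUnit _ (hzA _)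
    have hiff : ((∏ i, (z (.inr i) + u) : ℤ) : ZMod q) = ((∏ i, (z (.inl i) + u) : ℤ) : ZMod q) ↔
        ∏ i, (z (.inl i) + u) = ∏ i, (z (.inr i) + u) :=
      ⟨fun h => hq.prod_eq z hzA h.symm, fun h => by rw [h]⟩
    rw [← if_congr hiff rfl rfl, ← DirichletCharacter.sum_char_inv_mul_char_eq ℂ hunit]
    refine Finset.sum_congr rfl fun χ _ => ?_
    have hstar : χ ((∏ i, (z (.inr i) + u) : ℤ) : ZMod q)⁻¹ =
        star (χ ((∏ i, (z (.inr i) + u) : ℤ) : ZMod q)) := by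
      rw [MulChar.star_apply', MulChar.inv_apply_eq_inv']
      refine eq_inv_of_mul_eq_one_left ?_
      rw [← map_mul, ZMod.inv_mul_of_unit _ hunit, map_one]
    rw [Fintype.prod_sum_type, hstar, Int.cast_prod, Int.cast_prod, map_prod, map_prod, star_prod,
      mul_comm]
    rfl
  simp_rw [hexpand]
  rw [Finset.sum_comm, Finset.sum_congr rfl horth, ← Finset.sum_filter, Finset.sum_const,
    nsmul_eq_mul, mul_comm, shiftSolutions]

theorem totient_mul_card_shiftSolutions_le {k : ℕ} {A : Finset ℤ} {u : ℤ} {q : ℕ} [NeZero q]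
    (hq : IsFaithfulModulus k A u q) {B : Fin k ⊕ Fin k → Finset ℤ} (hB : ∀ s, B s ⊆ A) :
    (q.totient : ℝ) * #(shiftSolutions u B) ≤
      ∑ χ : DirichletCharacter ℂ q, ∏ s, ‖charSum u (B s) χ‖ := by
  have h := congrArg norm (totient_mul_card_shiftSolutions hq hB)
  rw [norm_mul, Complex.norm_natCast, Complex.norm_natCast] at h
  rw [h]
  refine (norm_sum_le _ _).trans_eq (Finset.sum_congr rfl fun χ _ => ?_)
  simp [Fintype.prod_sum_type]

theorem sum_norm_charSum_pow {k : ℕ} {A : Finset ℤ} {u : ℤ} {q : ℕ} [NeZero q]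
    (hq : IsFaithfulModulus k A u q) {S : Finset ℤ} (hS : S ⊆ A) :
    ∑ χ : DirichletCharacter ℂ q, (‖charSum u S χ‖ ^ 2) ^ k =
      q.totient * #(shiftSolutions (k := k) u fun _ => S) := by
  have h := totient_mul_card_shiftSolutions hq (B := fun _ => S) fun _ => hS
  have hc : ((∑ χ : DirichletCharacter ℂ q, (‖charSum u S χ‖ ^ 2) ^ k : ℝ) : ℂ) =
      q.totient * #(shiftSolutions (k := k) u fun _ => S) := by
    rw [h]
    push_cast
    refine Finset.sum_congr rfl fun χ _ => ?_
    simp only [Finset.prod_const, Finset.card_univ, Fintype.card_fin]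
    rw [← mul_pow]
    congr 1
    exact (Complex.mul_conj' _).symm
  exact_mod_cast hc

/-- The elements of `S` with `p`-adic valuation `j`. -/
def valuationFiber (S : Finset ℤ) (p j : ℕ) : Finset ℤ :=
  {a ∈ S | a.natAbs.factorization p = j}

theorem card_shiftSolutions_le {k : ℕ} (hk : 0 < k) {S : Finset ℤ} {u : ℤ} {p : ℕ}
    (hp : p.Prime) (hS0 : ∀ a ∈ S, a ≠ 0) (hpS : ∀ a ∈ S, (p : ℤ) ∣ a)
    (hu : ∀ a ∈ S, IsCoprime u a) :
    #(shiftSolutions (k := k) u fun _ => S) ≤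
      ∑ j ∈ S.image fun a => a.natAbs.factorization p,
        ∑ P ∈ Finset.powersetCard 2 (Finset.univ : Finset (Fin k ⊕ Fin k)),
          #(shiftSolutions u fun s => if s ∈ P then valuationFiber S p j else S) := by
  classical
  rw [← Finset.sum_product']
  refine (Finset.card_le_card ?_).trans Finset.card_biUnion_le
  intro z hz
  obtain ⟨hzS, heq⟩ := Finset.mem_filter.mp hz
  rw [Fintype.mem_piFinset] at hzS
  obtain ⟨s, t, hst, hval⟩ := exists_factorization_eq_of_prod_add_eq hk hp
    (fun s => hS0 _ (hzS s)) (fun s => hpS _ (hzS s)) (fun s => hu _ (hzS s)) heq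
  refine Finset.mem_biUnion.mpr ⟨((z s).natAbs.factorization p, {s, t}), ?_, ?_⟩
  · rw [Finset.mem_product]
    exact ⟨Finset.mem_image_of_mem _ (hzS s),
      by simp [Finset.mem_powersetCard, Finset.card_pair hst]⟩
  · refine Finset.mem_filter.mpr ⟨Fintype.mem_piFinset.mpr fun r => ?_, heq⟩
    split_ifs with hr
    · rcases Finset.mem_insert.mp hr with rfl | hr
      · exact Finset.mem_filter.mpr ⟨hzS r, rfl⟩
      · rw [Finset.mem_singleton] at hr
        subst hr
        exact Finset.mem_filter.mpr ⟨hzS r, hval.symm⟩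
    · exact hzS r

theorem powNorm_charSum_le_of_dvd {k : ℕ} (hk : 2 ≤ k) {A S : Finset ℤ} {u : ℤ} {q : ℕ} [NeZero q]
    (hq : IsFaithfulModulus k A u q) (hSA : S ⊆ A) {p : ℕ} (hp : p.Prime)
    (hS0 : ∀ a ∈ S, a ≠ 0) (hpS : ∀ a ∈ S, (p : ℤ) ∣ a) (hu : ∀ a ∈ S, IsCoprime u a) :
    powNorm k (fun χ : DirichletCharacter ℂ q => ‖charSum u S χ‖ ^ 2) ≤
      (k * (2 * k - 1)) * ∑ j ∈ S.image fun a => a.natAbs.factorization p,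
        powNorm k (fun χ : DirichletCharacter ℂ q => ‖charSum u (valuationFiber S p j) χ‖ ^ 2) := by
  have hk2 : (2 : ℝ) ≤ k := by exact_mod_cast hk
  have hC : (0 : ℝ) ≤ k * (2 * k - 1) := mul_nonneg (by linarith) (by linarith)
  set J := S.image fun a => a.natAbs.factorization p
  have hchoose : (((2 * k).choose 2 : ℕ) : ℝ) = k * (2 * k - 1) := by
    rw [Nat.cast_choose_two]
    push_cast
    ring
  refine (powNorm_le_of_sum_pow_le hk (fun _ => sq_nonneg _)
    (g := fun χ => ∑ j ∈ J, ‖charSum u (valuationFiber S p j) χ‖ ^ 2)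
    (fun χ => Finset.sum_nonneg fun j _ => sq_nonneg _) hC ?_).trans
    (mul_le_mul_of_nonneg_left (powNorm_sum_le (by omega) J fun _ _ => sq_nonneg _) hC)
  have hterm : ∀ j, ∀ P ∈ Finset.powersetCard 2 (Finset.univ : Finset (Fin k ⊕ Fin k)),
      (q.totient : ℝ) *
        #(shiftSolutions u fun s => if s ∈ P then valuationFiber S p j else S) ≤
      ∑ χ : DirichletCharacter ℂ q,
        ‖charSum u (valuationFiber S p j) χ‖ ^ 2 * (‖charSum u S χ‖ ^ 2) ^ (k - 1) := by
    intro j P hP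
    have hPcard := (Finset.mem_powersetCard.mp hP).2
    refine (totient_mul_card_shiftSolutions_le hq fun s => ?_).trans_eq
      (Finset.sum_congr rfl fun χ _ => ?_)
    · split_ifs
      exacts [(Finset.filter_subset _ _).trans hSA, hSA]
    · have hite : ∀ s, ‖charSum u (if s ∈ P then valuationFiber S p j else S) χ‖ =
          if s ∈ P then ‖charSum u (valuationFiber S p j) χ‖ else ‖charSum u S χ‖ := by
        intro s
        split_ifs <;> rfl
      simp_rw [hite]
      rw [Finset.prod_ite, Finset.prod_const, Finset.prod_const, Finset.filter_mem_eq_inter,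
        Finset.univ_inter, hPcard, ← pow_mul]
      congr 2
      rw [Finset.filter_not, Finset.card_sdiff_of_subset (Finset.filter_subset _ _),
        Finset.filter_mem_eq_inter, Finset.univ_inter, hPcard, Finset.card_univ,
        Fintype.card_sum, Fintype.card_fin]
      omega
  rw [sum_norm_charSum_pow hq hSA]
  calc (q.totient : ℝ) * #(shiftSolutions (k := k) u fun _ => S)
      ≤ q.totient * ∑ j ∈ J, ∑ P ∈ Finset.powersetCard 2 (Finset.univ : Finset (Fin k ⊕ Fin k)),
          (#(shiftSolutions u fun s => if s ∈ P then valuationFiber S p j else S) : ℝ) := by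
        gcongr
        exact_mod_cast card_shiftSolutions_le (by omega) hp hS0 hpS hu
    _ ≤ ∑ j ∈ J, ∑ P ∈ Finset.powersetCard 2 (Finset.univ : Finset (Fin k ⊕ Fin k)),
          ∑ χ : DirichletCharacter ℂ q,
            ‖charSum u (valuationFiber S p j) χ‖ ^ 2 * (‖charSum u S χ‖ ^ 2) ^ (k - 1) := by
        simp_rw [Finset.mul_sum]
        exact Finset.sum_le_sum fun j _ => Finset.sum_le_sum fun P hP => hterm j P hP
    _ = _ := by
        simp_rw [Finset.sum_const, Finset.card_powersetCard, Finset.card_univ, Fintype.card_sum,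
          Fintype.card_fin, ← two_mul, nsmul_eq_mul, hchoose, ← Finset.mul_sum, Finset.sum_mul]
        rw [Finset.sum_comm]

theorem norm_add_sq_le {k : ℕ} (hk : 0 < k) (x y : ℂ) :
    ‖x + y‖ ^ 2 ≤ 2 * k * ‖x‖ ^ 2 + 2 * k / (2 * k - 1) * ‖y‖ ^ 2 := by
  have hk1 : (1 : ℝ) ≤ k := by exact_mod_cast hk
  have hpos : (0 : ℝ) < 2 * k - 1 := by linarith
  have hdiff : 2 * k * ‖x‖ ^ 2 + 2 * k / (2 * k - 1) * ‖y‖ ^ 2 - (‖x‖ + ‖y‖) ^ 2 =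
      ((2 * k - 1) * ‖x‖ - ‖y‖) ^ 2 / (2 * k - 1) := by
    field_simp
    ring
  have hsq : ‖x + y‖ ^ 2 ≤ (‖x‖ + ‖y‖) ^ 2 :=
    pow_le_pow_left₀ (norm_nonneg _) (norm_add_le x y) 2
  have := div_nonneg (sq_nonneg ((2 * k - 1) * ‖x‖ - ‖y‖)) hpos.le
  linarith

/-- Passing from the `p`-adic valuation fibers of `S` to `S` costs a factor of `2 k ^ 2`. -/
theorem powNorm_charSum_le_of_valuationFiber {k : ℕ} (hk : 2 ≤ k) {A S : Finset ℤ} {u : ℤ} {q : ℕ}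
    [NeZero q] (hq : IsFaithfulModulus k A u q) (hSA : S ⊆ A) {p : ℕ} (hp : p.Prime)
    (hS0 : ∀ a ∈ S, a ≠ 0) (hu : ∀ a ∈ S, IsCoprime u a) {D : ℝ} (hD : 0 ≤ D)
    (hfiber : ∀ j, powNorm k (fun χ : DirichletCharacter ℂ q =>
      ‖charSum u (valuationFiber S p j) χ‖ ^ 2) ≤ D * #(valuationFiber S p j)) :
    powNorm k (fun χ : DirichletCharacter ℂ q => ‖charSum u S χ‖ ^ 2) ≤
      2 * (k : ℝ) ^ 2 * D * #S := by
  have hk2 : (2 : ℝ) ≤ k := by exact_mod_cast hk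
  have hpos : (0 : ℝ) < 2 * k - 1 := by linarith
  set T : Finset ℤ := {a ∈ S | ¬ a.natAbs.factorization p = 0} with hT
  have hTS : T ⊆ S := Finset.filter_subset _ _
  have hsum : ∀ χ : DirichletCharacter ℂ q,
      charSum u S χ = charSum u (valuationFiber S p 0) χ + charSum u T χ := fun χ =>
    (Finset.sum_filter_add_sum_filter_not S (fun a => a.natAbs.factorization p = 0) _).symm
  have hcard : #(valuationFiber S p 0) + #T = #S :=
    Finset.card_filter_add_card_filter_not (fun a : ℤ => a.natAbs.factorization p = 0)
  have hTcard : #T = ∑ j ∈ T.image fun a => a.natAbs.factorization p, #(valuationFiber T p j) :=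
    Finset.card_eq_sum_card_image _ _
  have hfib : ∀ j ∈ T.image fun a => a.natAbs.factorization p,
      valuationFiber T p j = valuationFiber S p j := by
    intro j hj
    obtain ⟨a, ha, rfl⟩ := Finset.mem_image.mp hj
    have ha0 := (Finset.mem_filter.mp ha).2
    ext b
    simp only [valuationFiber, hT, Finset.mem_filter]
    constructor
    · rintro ⟨⟨h₁, -⟩, h₂⟩
      exact ⟨h₁, h₂⟩
    · rintro ⟨h₁, h₂⟩
      exact ⟨⟨h₁, h₂ ▸ ha0⟩, h₂⟩
  have hTbound : powNorm k (fun χ : DirichletCharacter ℂ q => ‖charSum u T χ‖ ^ 2) ≤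
      (k * (2 * k - 1)) * (D * #T) := by
    refine (powNorm_charSum_le_of_dvd hk hq (hTS.trans hSA) hp (fun a ha => hS0 a (hTS ha))
      (fun a ha => ?_) fun a ha => hu a (hTS ha)).trans ?_
    · exact Int.natCast_dvd.mpr
        (Nat.dvd_of_factorization_pos (Finset.mem_filter.mp ha).2)
    · refine mul_le_mul_of_nonneg_left ?_ (mul_nonneg (by linarith) hpos.le)
      rw [hTcard, Nat.cast_sum, Finset.mul_sum]
      refine Finset.sum_le_sum fun j hj => ?_
      rw [hfib j hj]
      exact hfiber j
  have hnn : (0 : ℝ) ≤ 2 * k / (2 * k - 1) := div_nonneg (by linarith) hpos.le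
  calc powNorm k (fun χ : DirichletCharacter ℂ q => ‖charSum u S χ‖ ^ 2)
      ≤ powNorm k (fun χ : DirichletCharacter ℂ q =>
          2 * k * ‖charSum u (valuationFiber S p 0) χ‖ ^ 2 +
            2 * k / (2 * k - 1) * ‖charSum u T χ‖ ^ 2) := by
        refine powNorm_mono (fun _ => sq_nonneg _) fun χ => ?_
        rw [hsum χ]
        exact norm_add_sq_le (by omega) _ _
    _ ≤ 2 * k * powNorm k (fun χ : DirichletCharacter ℂ q =>
            ‖charSum u (valuationFiber S p 0) χ‖ ^ 2) +
          2 * k / (2 * k - 1) * powNorm k (fun χ : DirichletCharacter ℂ q =>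
            ‖charSum u T χ‖ ^ 2) := by
        rw [← powNorm_const_mul (by omega) (by positivity) fun _ => sq_nonneg _,
          ← powNorm_const_mul (by omega) hnn fun _ => sq_nonneg _]
        exact powNorm_add_le (by omega) (fun _ => by positivity)
          fun _ => mul_nonneg hnn (sq_nonneg _)
    _ ≤ 2 * k * (D * #(valuationFiber S p 0)) +
          2 * k / (2 * k - 1) * ((k * (2 * k - 1)) * (D * #T)) := by
        gcongr
        exact hfiber 0
    _ = 2 * k * (D * #(valuationFiber S p 0)) + 2 * (k : ℝ) ^ 2 * (D * #T) := by
        field_simp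
    _ ≤ 2 * (k : ℝ) ^ 2 * (D * #(valuationFiber S p 0)) + 2 * (k : ℝ) ^ 2 * (D * #T) := by
        gcongr
        nlinarith
    _ = 2 * (k : ℝ) ^ 2 * D * #S := by
        rw [← hcard]
        push_cast
        ring

/-- The exponents in the prime factorization of an integer, as a rational vector. -/
noncomputable def exponentVector (a : ℤ) : ℕ →₀ ℚ :=
  a.natAbs.factorization.mapRange Nat.cast Nat.cast_zero

theorem exponentVector_apply (a : ℤ) (p : ℕ) :
    exponentVector a p = a.natAbs.factorization p := rfl

theorem exponentVector_mul {a b : ℤ} (ha : a ≠ 0) (hb : b ≠ 0) :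
    exponentVector (a * b) = exponentVector a + exponentVector b := by
  ext p
  simp [exponentVector_apply, Int.natAbs_mul,
    Nat.factorization_mul (Int.natAbs_ne_zero.mpr ha) (Int.natAbs_ne_zero.mpr hb)]

theorem linearCombination_log_exponentVector (a : ℤ) :
    Finsupp.linearCombination ℚ (fun p : ℕ => Real.log p) (exponentVector a) =
      Real.log a.natAbs := by
  rw [Real.log_nat_eq_sum_factorization, Finsupp.linearCombination_apply, exponentVector,
    Finsupp.sum_mapRange_index (by simp)]
  simp [Rat.smul_def]

theorem log_natAbs_injOn {A : Finset ℤ} (hA : ∀ a ∈ A, 0 < a) :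
    Set.InjOn (fun a : ℤ => Real.log a.natAbs) A := by
  intro a ha b hb hab
  have ha0 := hA a ha
  have hb0 := hA b hb
  have := Real.log_injOn_pos (by simp; omega) (by simp; omega) hab
  have : a.natAbs = b.natAbs := by exact_mod_cast this
  omega

theorem exponentVector_injOn {A : Finset ℤ} (hA : ∀ a ∈ A, 0 < a) :
    Set.InjOn exponentVector A := by
  intro a ha b hb hab
  refine log_natAbs_injOn hA ha hb ?_
  simp only [← linearCombination_log_exponentVector, hab]

open Module in
theorem finrank_vectorSpan_exponentVector_lt {A : Finset ℤ} (hA : ∀ a ∈ A, 0 < a) {K : ℕ}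
    (hAA : #(A * A) ≤ K * #A) (hcard : K * (K + 1) < #A) :
    finrank ℚ (vectorSpan ℚ (exponentVector '' A)) < K := by
  by_contra! hle
  rw [← Finset.coe_image] at hle
  have hinj : Set.InjOn (Finsupp.linearCombination ℚ fun p : ℕ => Real.log p)
      (A.image exponentVector : Finset (ℕ →₀ ℚ)) := by
    rw [Finset.coe_image]
    rintro _ ⟨a, ha, rfl⟩ _ ⟨b, hb, rfl⟩ hab
    rw [linearCombination_log_exponentVector, linearCombination_log_exponentVector] at hab
    rw [log_natAbs_injOn hA ha hb hab]
  have h := freiman_lemma _ _ hinj K hle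
  have hadd : A.image exponentVector + A.image exponentVector ⊆ (A * A).image exponentVector := by
    intro x hx
    obtain ⟨_, hy, _, hz, rfl⟩ := Finset.mem_add.mp hx
    obtain ⟨a, ha, rfl⟩ := Finset.mem_image.mp hy
    obtain ⟨b, hb, rfl⟩ := Finset.mem_image.mp hz
    rw [← exponentVector_mul (hA a ha).ne' (hA b hb).ne']
    exact Finset.mem_image_of_mem _ (Finset.mul_mem_mul ha hb)
  have hle' := (Finset.card_le_card hadd).trans Finset.card_image_le
  rw [Finset.card_image_of_injOn (exponentVector_injOn hA)] at h
  nlinarith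

open Module in
theorem finrank_vectorSpan_valuationFiber_lt {S : Finset ℤ} {a b : ℤ} (ha : a ∈ S) (hb : b ∈ S)
    {p : ℕ} (hab : a.natAbs.factorization p ≠ b.natAbs.factorization p) (j : ℕ) :
    finrank ℚ (vectorSpan ℚ (exponentVector '' (valuationFiber S p j))) <
      finrank ℚ (vectorSpan ℚ (exponentVector '' S)) := by
  have : FiniteDimensional ℚ (vectorSpan ℚ (exponentVector '' (S : Set ℤ))) :=
    finiteDimensional_vectorSpan_of_finite ℚ (S.finite_toSet.image _)
  refine Submodule.finrank_lt_finrank_of_lt (lt_of_le_of_ne (vectorSpan_mono ℚ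
    (Set.image_mono (Finset.coe_subset.mpr (Finset.filter_subset _ _)))) fun heq => ?_)
  have hker : vectorSpan ℚ (exponentVector '' (valuationFiber S p j : Set ℤ)) ≤
      LinearMap.ker (Finsupp.lapply p : (ℕ →₀ ℚ) →ₗ[ℚ] ℚ) := by
    rw [vectorSpan_def, Submodule.span_le]
    rintro _ ⟨_, ⟨x, hx, rfl⟩, _, ⟨y, hy, rfl⟩, rfl⟩
    have hx' := (Finset.mem_filter.mp (Finset.mem_coe.mp hx)).2
    have hy' := (Finset.mem_filter.mp (Finset.mem_coe.mp hy)).2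
    simp [exponentVector_apply, hx', hy']
  have hmem := hker (heq ▸ vsub_mem_vectorSpan ℚ (Set.mem_image_of_mem exponentVector ha)
    (Set.mem_image_of_mem exponentVector hb))
  simp only [vsub_eq_sub, LinearMap.mem_ker, Finsupp.lapply_apply, Finsupp.sub_apply,
    exponentVector_apply, sub_eq_zero, Nat.cast_inj] at hmem
  exact hab hmem

open Module in
theorem powNorm_charSum_le_of_finrank_le {k : ℕ} (hk : 2 ≤ k) {A : Finset ℤ} {u : ℤ} {q : ℕ}
    [NeZero q] (hq : IsFaithfulModulus k A u q) (hA : ∀ a ∈ A, 0 < a)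
    (hu : ∀ a ∈ A, IsCoprime u a) (d : ℕ) (S : Finset ℤ) (hSA : S ⊆ A)
    (hd : finrank ℚ (vectorSpan ℚ (exponentVector '' S)) ≤ d) :
    powNorm k (fun χ : DirichletCharacter ℂ q => ‖charSum u S χ‖ ^ 2) ≤
      (2 * (k : ℝ) ^ 2) ^ d * powNorm k (fun _ : DirichletCharacter ℂ q => 1) * #S := by
  have hk2 : (2 : ℝ) ≤ k := by exact_mod_cast hk
  have hone : 0 ≤ powNorm k (fun _ : DirichletCharacter ℂ q => (1 : ℝ)) :=
    powNorm_nonneg fun _ => zero_le_one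
  induction d using Nat.strong_induction_on generalizing S with
  | _ d ih =>
  by_cases hex : ∃ a ∈ S, ∃ b ∈ S, ∃ p, a.natAbs.factorization p ≠ b.natAbs.factorization p
  · obtain ⟨a, ha, b, hb, p, hab⟩ := hex
    have hp : p.Prime := by
      by_contra hp
      exact hab (by simp [Nat.factorization_eq_zero_of_not_prime _ hp])
    have hlt := finrank_vectorSpan_valuationFiber_lt ha hb hab
    obtain ⟨d, rfl⟩ : ∃ d', d = d' + 1 := ⟨d - 1, by have := hlt 0; omega⟩
    refine (powNorm_charSum_le_of_valuationFiber hk hq hSA hp (fun a ha => (hA a (hSA ha)).ne')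
      (fun a ha => hu a (hSA ha)) (mul_nonneg (by positivity) hone) fun j =>
      ih d (Nat.lt_succ_self d) _ ((Finset.filter_subset _ _).trans hSA)
        (by have := hlt j; omega)).trans_eq ?_
    ring
  · push Not at hex
    have hcard : #S ≤ 1 := Finset.card_le_one.mpr fun a ha b hb =>
      exponentVector_injOn hA (hSA ha) (hSA hb) (Finsupp.ext fun p => by
        rw [exponentVector_apply, exponentVector_apply, hex a ha b hb p])
    have hcard' : (#S : ℝ) ≤ 1 := by exact_mod_cast hcard
    have hbound : ∀ χ : DirichletCharacter ℂ q, ‖charSum u S χ‖ ^ 2 ≤ #S * 1 := by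
      intro χ
      have hnorm : ‖charSum u S χ‖ ≤ #S := by
        refine (norm_sum_le _ _).trans ?_
        simpa using Finset.sum_le_card_nsmul S _ 1 fun a _ => χ.norm_le_one _
      nlinarith [norm_nonneg (charSum u S χ)]
    calc powNorm k (fun χ : DirichletCharacter ℂ q => ‖charSum u S χ‖ ^ 2)
        ≤ powNorm k (fun _ : DirichletCharacter ℂ q => #S * (1 : ℝ)) :=
          powNorm_mono (fun _ => sq_nonneg _) hbound
      _ = 1 * powNorm k (fun _ : DirichletCharacter ℂ q => (1 : ℝ)) * #S := by
          rw [powNorm_const_mul (by omega) (by positivity) fun _ => zero_le_one]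
          ring
      _ ≤ _ := by
          gcongr
          exact one_le_pow₀ (by nlinarith)

open Module in
/-- The number of solutions of `∏ (xᵢ + u) = ∏ (yᵢ + u)` with all variables in a set of
multiplicative dimension at most `d`. -/
theorem card_shiftSolutions_le_of_finrank_le {k : ℕ} (hk : 2 ≤ k) {A : Finset ℤ} {u : ℤ}
    (hA : ∀ a ∈ A, 0 < a) (hu : ∀ a ∈ A, IsCoprime u a) (huA : -u ∉ A) {d : ℕ}
    (hd : finrank ℚ (vectorSpan ℚ (exponentVector '' A)) ≤ d) :
    (#(shiftSolutions (k := k) u fun _ => A) : ℝ) ≤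
      (2 * (k : ℝ) ^ 2) ^ (k * d) * (#A : ℝ) ^ k := by
  obtain ⟨q, hprime, hq⟩ := exists_prime_isFaithfulModulus k A u huA
  have : NeZero q := ⟨hprime.ne_zero⟩
  have hpos : (0 : ℝ) < q.totient := by exact_mod_cast Nat.totient_pos.mpr hprime.pos
  have hone : powNorm k (fun _ : DirichletCharacter ℂ q => (1 : ℝ)) ^ k = q.totient := by
    rw [powNorm_pow (by omega) fun _ => zero_le_one,
      ← DirichletCharacter.card_eq_totient_of_hasEnoughRootsOfUnity ℂ q, Nat.card_eq_fintype_card]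
    simp
  have h := pow_le_pow_left₀ (powNorm_nonneg fun _ => sq_nonneg _)
    (powNorm_charSum_le_of_finrank_le hk hq hA hu d A subset_rfl hd) k
  rw [powNorm_pow (by omega) fun _ => sq_nonneg _, sum_norm_charSum_pow hq subset_rfl, mul_pow,
    mul_pow, hone, ← pow_mul, mul_comm d k] at h
  refine le_of_mul_le_mul_left (h.trans_eq ?_) hpos
  ring

theorem card_pow_sq_le_card_kfoldProdInt_mul (k : ℕ) (A : Finset ℤ) (u : ℤ) :
    (#A ^ k) ^ 2 ≤ #(kfoldProdInt k (A.image fun a => a + u)) *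
      #(shiftSolutions (k := k) u fun _ => A) := by
  set P := kfoldProdInt k (A.image fun a => a + u)
  set T := Fintype.piFinset fun _ : Fin k => A with hT
  have hmaps : ∀ x ∈ T, ∏ i, (x i + u) ∈ P := fun x hx =>
    Finset.mem_image.mpr ⟨fun i => x i + u, Fintype.mem_piFinset.mpr fun i =>
      Finset.mem_image_of_mem _ (Fintype.mem_piFinset.mp hx i), rfl⟩
  have hTcard : #T = #A ^ k := by simp [hT]
  have hsol : ∑ b ∈ P, #{x ∈ T | ∏ i, (x i + u) = b} ^ 2 ≤
      #(shiftSolutions (k := k) u fun _ => A) := by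
    have hinl : ∀ z ∈ shiftSolutions (k := k) u fun _ => A, ∏ i, (z (.inl i) + u) ∈ P :=
      fun z hz => hmaps (fun i => z (.inl i)) (Fintype.mem_piFinset.mpr fun i =>
        Fintype.mem_piFinset.mp (Finset.mem_filter.mp hz).1 _)
    rw [Finset.card_eq_sum_card_fiberwise hinl]
    refine Finset.sum_le_sum fun b _ => ?_
    rw [sq, ← Finset.card_product]
    refine Finset.card_le_card_of_injOn (fun xy => Sum.elim xy.1 xy.2) ?_
      (Equiv.sumArrowEquivProdArrow _ _ _).symm.injective.injOn
    rintro ⟨x, y⟩ hxy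
    simp only [Finset.coe_product, Set.mem_prod, Finset.mem_coe, Finset.mem_filter, hT,
      Fintype.mem_piFinset] at hxy
    obtain ⟨⟨hx, hxb⟩, hy, hyb⟩ := hxy
    simp only [shiftSolutions, Finset.mem_coe, Finset.mem_filter, Fintype.mem_piFinset,
      Sum.elim_inl, Sum.elim_inr, Sum.forall]
    exact ⟨⟨⟨hx, hy⟩, hxb.trans hyb.symm⟩, hxb⟩
  rw [← hTcard, Finset.card_eq_sum_card_fiberwise hmaps]
  exact sq_sum_le_card_mul_sum_sq.trans (Nat.mul_le_mul_left _ hsol)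

theorem product_of_shift_integer_case (K : ℕ) (hK : 0 < K) :
    ∃ N : ℕ, ∀ k : ℕ, 2 ≤ k →
      ∀ A : Finset ℤ, (∀ a ∈ A, 0 < a) → N ≤ A.card →
      (A * A).card ≤ K * A.card →
      ∀ u : ℤ, u ≠ 0 → (∀ a ∈ A, IsCoprime u a) → -u ∉ A →
      (A.card : ℝ) ^ k / (2 * (k : ℝ) ^ 2) ^ (k * K) ≤
        ((kfoldProdInt k (A.image fun a => a + u)).card : ℝ) := by
  refine ⟨K * (K + 1) + 1, fun k hk A hA hN hAA u _ hu huA => ?_⟩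
  have hsol := card_shiftSolutions_le_of_finrank_le hk hA hu huA
    (finrank_vectorSpan_exponentVector_lt hA hAA hN).le
  have hsq : ((A.card : ℝ) ^ k) ^ 2 ≤ #(kfoldProdInt k (A.image fun a => a + u)) *
      (#(shiftSolutions (k := k) u fun _ => A) : ℝ) := by
    exact_mod_cast card_pow_sq_le_card_kfoldProdInt_mul k A u
  have hApos : (0 : ℝ) < (A.card : ℝ) ^ k := by
    have : 0 < A.card := by omega
    positivity
  rw [div_le_iff₀ (by positivity)]
  refine le_of_mul_le_mul_right ?_ hApos
  rw [← sq, mul_assoc]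
  exact hsq.trans (by gcongr)
end
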